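/- arXiv:2309.15322 — 2 statements merged into one kernel-verified Lean document; each statement's English description precedes it below -/
import Mathlib

section
/- There exists a constant C > 0 with the following property. Let n, k be positive integers, let each of n vertices be assigned independently and uniformly at random to one of k clusters, and let 0 ≤ q < p ≤ 1 with σ² := max{p(1−p), q(1−q)}. If σ² ≥ C·log n / n and n ≥ C·k·((√(kp)·(log n)⁶ + √(log n))/(p−q))², then with probability at least 1 − C/n (over the random partition and the random graph) the following separation holds with Δ := 0.8·(p−q)·√(n/k): for all vertices u, v, if u and v lie in the same cluster then ‖P_{Ĝ_k}Ĝ_u − P_{Ĝ_k}Ĝ_v‖ ≤ Δ/4, and if u and v lie in different clusters then ‖P_{Ĝ_k}Ĝ_u − P_{Ĝ_k}Ĝ_v‖ ≥ Δ. (Consequently the vanilla-SVD algorithm, which runs ClusterByDistance on the representation ρ(u) = P_{Ĝ_k}Ĝ_u, recovers all clusters.) -/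
open MeasureTheory ProbabilityTheory Matrix Finset

namespace SBM

/-- Euclidean norm of a vector. -/
noncomputable def enorm {m : Type*} [Fintype m] (x : m → ℝ) : ℝ :=
  Real.sqrt (∑ i, x i ^ 2)

/-- Spectral (ℓ²-operator) norm of a matrix. -/
noncomputable def specNorm {n : ℕ} (A : Matrix (Fin n) (Fin n) ℝ) : ℝ :=
  ‖Matrix.toEuclideanCLM (𝕜 := ℝ) A‖

/-- The `2 → ∞` norm: maximal Euclidean norm of a row. -/
noncomputable def n2i {n : ℕ} (A : Matrix (Fin n) (Fin n) ℝ) : ℝ :=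
  ⨆ i : Fin n, enorm (A i)

/-- The mean matrix `G` of the SSBM with cluster assignment `cl`. -/
def meanMatrix (n k : ℕ) (p q : ℝ) (cl : Fin n → Fin k) : Matrix (Fin n) (Fin n) ℝ :=
  Matrix.of fun u v => if cl u = cl v then p else q

/-- The size of cluster `i`. -/
def clusterSize {n k : ℕ} (cl : Fin n → Fin k) (i : Fin k) : ℕ :=
  (Finset.univ.filter fun v => cl v = i).card

/-- The partition is balanced: every cluster size is within a `1 ± 1/(16 log n)` factor
of `n / k`. -/
noncomputable def Balanced (n k : ℕ) (cl : Fin n → Fin k) : Prop :=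
  ∀ i : Fin k,
    (1 - 1 / (16 * Real.log n)) * ((n : ℝ) / k) ≤ (clusterSize cl i : ℝ) ∧
    (clusterSize cl i : ℝ) ≤ (1 + 1 / (16 * Real.log n)) * ((n : ℝ) / k)

/-- `lam, v` is a spectral decomposition of `A`: eigenvalues in non-increasing order with
an orthonormal eigenbasis. -/
def IsSpectralDecomp {n : ℕ} (A : Matrix (Fin n) (Fin n) ℝ)
    (lam : Fin n → ℝ) (v : Fin n → Fin n → ℝ) : Prop :=
  Antitone lam ∧
  (∀ i j, dotProduct (v i) (v j) = if i = j then (1 : ℝ) else 0) ∧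
  A = ∑ i, lam i • Matrix.vecMulVec (v i) (v i)

/-- Orthogonal projection onto the span of the top `k` eigenvectors `v 0, …, v (k-1)`. -/
noncomputable def projTop {n : ℕ} (k : ℕ) (v : Fin n → Fin n → ℝ) :
    Matrix (Fin n) (Fin n) ℝ :=
  ∑ i ∈ Finset.univ.filter (fun i : Fin n => (i : ℕ) < k), Matrix.vecMulVec (v i) (v i)

/-- The column of `A` indexed by `u`. -/
def column {n : ℕ} (A : Matrix (Fin n) (Fin n) ℝ) (u : Fin n) : Fin n → ℝ :=
  fun i => A i u

/-- `ψ(M) = A·M² + B·M` where `A = -1/(λ₁μ)`, `B = 1/λ₁ + 1/μ`. -/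
noncomputable def psiM {n : ℕ} (lam1 mu : ℝ) (M : Matrix (Fin n) (Fin n) ℝ) :
    Matrix (Fin n) (Fin n) ℝ :=
  (-(1 / (lam1 * mu))) • (M * M) + (1 / lam1 + 1 / mu) • M

/-- `φ(M) = ψ(M)^r`. -/
noncomputable def phiM {n : ℕ} (lam1 mu : ℝ) (r : ℕ) (M : Matrix (Fin n) (Fin n) ℝ) :
    Matrix (Fin n) (Fin n) ℝ :=
  psiM lam1 mu M ^ r

/-- `ψ(t) = A·t² + B·t` where `A = -1/(λ₁μ)`, `B = 1/λ₁ + 1/μ`. -/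
noncomputable def psiR (lam1 mu t : ℝ) : ℝ :=
  (-(1 / (lam1 * mu))) * t ^ 2 + (1 / lam1 + 1 / mu) * t

/-- `φ(t) = ψ(t)^r`. -/
noncomputable def phiR (lam1 mu : ℝ) (r : ℕ) (t : ℝ) : ℝ := psiR lam1 mu t ^ r

end SBM

namespace SBM

/-- Index type for the (unordered) edges: pairs `(u, v)` with `u ≤ v`. -/
def EIdx (n : ℕ) := {e : Fin n × Fin n // e.1 ≤ e.2}

/-- The unordered pair `{u, v}` as an element of `EIdx n`. -/
def symPair {n : ℕ} (u v : Fin n) : EIdx n :=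
  if h : u ≤ v then ⟨(u, v), h⟩ else ⟨(v, u), le_of_not_ge h⟩

/-- The SSBM noise matrix `E` built from the cluster assignment `cl` and the i.i.d.
uniform-`[0,1)` edge variables `U`: entry `E_{uv}` equals `1 − G_{uv}` with probability
`G_{uv}` and `−G_{uv}` with probability `1 − G_{uv}`, symmetric, and independent over
`u ≤ v`. -/
noncomputable def noiseOf {n k : ℕ} (p q : ℝ) (cl : Fin n → Fin k) (U : EIdx n → ℝ) :
    Matrix (Fin n) (Fin n) ℝ :=
  Matrix.of fun u v =>
    if U (symPair u v) < meanMatrix n k p q cl u v then 1 - meanMatrix n k p q cl u v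
    else -(meanMatrix n k p q cl u v)

/-- Codomains of the underlying independent random variables: cluster labels and
uniform edge variables. -/
def mixType (n k : ℕ) : Fin n ⊕ EIdx n → Type
  | Sum.inl _ => Fin k
  | Sum.inr _ => ℝ

/-- The measurable-space structures on `mixType`. -/
def mixMS (n k : ℕ) : ∀ i, MeasurableSpace (mixType n k i)
  | Sum.inl _ => (inferInstance : MeasurableSpace (Fin k))
  | Sum.inr _ => (inferInstance : MeasurableSpace ℝ)

/-- The combined family of random variables (cluster labels and edge variables). -/
def mixFam {Ω : Type*} {n k : ℕ} (cl : Ω → Fin n → Fin k) (U : Ω → EIdx n → ℝ) :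
    ∀ i : Fin n ⊕ EIdx n, Ω → mixType n k i
  | Sum.inl v => fun ω => cl ω v
  | Sum.inr e => fun ω => U ω e

end SBM

/-!
Write `Ĝ = G + E`. The range `S` of `G` consists of the vectors that are constant on clusters, and
on `S` the form of `G` is at least `μ ≍ (p - q) n / k`, far above `‖E‖`; so if `P` projects onto
the top `k` eigenvectors of `Ĝ`, then `‖(1 - P) Ĝ‖ ≤ ‖E‖` and `Ĝ` expands `range P` by about `μ`.
Pulling `P x` back along `Ĝ` gives `‖P x‖ ≤ 2 ‖P_S x‖ + (μ - ‖E‖)⁻¹ ‖P E x‖`. Iterating `A ≈ log n`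
times from `x = E e_u` bounds `P E e_u` by the vectors `P_S E ^ a e_u` with `a ≤ A`, that is, by the
sums of row `u` of `E ^ a` over the clusters. Once these *cluster energies* are small, `P Ĝ e_u` is
close to `G e_u`, and the columns of `G` are constant on clusters and well separated across them.

The cluster energies are bounded by the moment method. Their moments expand over families of
walks; a family contributes only if each of its edges is traversed twice, and the number of
vertices it visits is then at most one more than half its length. Taking singleton clusters, the
same estimate bounds `‖E‖` through the Frobenius norm of `E ^ A`. The clusters have size at least
`n / (2 k)` by a Chernoff bound.
-/

namespace SBM

/-! ### Eigenvalues and Rayleigh quotients -/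

section Rayleigh

open scoped RealInnerProductSpace
open Module

variable {ι H : Type*} [Fintype ι] [NormedAddCommGroup H] [InnerProductSpace ℝ H]
  (b : OrthonormalBasis ι ℝ H) {T : H →ₗ[ℝ] H} {lam : ι → ℝ} {t c : ℝ}

lemma abs_inner_apply_self_le {E : H →L[ℝ] H} {τ : ℝ} (hE : ‖E‖ ≤ τ) (x : H) :
    |⟪E x, x⟫| ≤ τ * ‖x‖ ^ 2 :=
  calc |⟪E x, x⟫| ≤ ‖E x‖ * ‖x‖ := abs_real_inner_le_norm _ _
    _ ≤ τ * ‖x‖ * ‖x‖ := by gcongr; exact E.le_of_opNorm_le hE x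
    _ = τ * ‖x‖ ^ 2 := by ring

lemma inner_apply_self_eq_sum (hT : ∀ i, T (b i) = lam i • b i) (x : H) :
    ⟪T x, x⟫ = ∑ i, lam i * ⟪b i, x⟫ ^ 2 := by
  have hTx : T x = ∑ i, (⟪b i, x⟫ * lam i) • b i := by
    conv_lhs => rw [← b.sum_repr' x]
    simp only [map_sum, map_smul, hT, smul_smul]
  rw [hTx, sum_inner]
  refine sum_congr rfl fun i _ ↦ ?_
  rw [real_inner_smul_left]
  ring

lemma inner_apply_self_le (hT : ∀ i, T (b i) = lam i • b i) {x : H}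
    (hx : ∀ i, t < lam i → ⟪b i, x⟫ = 0) : ⟪T x, x⟫ ≤ t * ‖x‖ ^ 2 := by
  rw [inner_apply_self_eq_sum b hT, ← b.sum_sq_inner_right x, mul_sum]
  refine sum_le_sum fun i _ ↦ ?_
  rcases le_or_gt (lam i) t with hi | hi
  · gcongr
  · simp [hx i hi]

lemma le_inner_apply_self (hT : ∀ i, T (b i) = lam i • b i) {x : H}
    (hx : ∀ i, lam i < t → ⟪b i, x⟫ = 0) : t * ‖x‖ ^ 2 ≤ ⟪T x, x⟫ := by
  have := inner_apply_self_le b (T := -T) (lam := -lam) (t := -t) (by simp [hT]) (x := x)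
    fun i hi ↦ hx i (neg_lt_neg_iff.1 hi)
  simpa using this

lemma norm_apply_le (hT : ∀ i, T (b i) = lam i • b i) (ht : 0 ≤ t) {x : H}
    (hx : ∀ i, t < |lam i| → ⟪b i, x⟫ = 0) : ‖T x‖ ≤ t * ‖x‖ := by
  have hcoord (i : ι) : ⟪b i, T x⟫ = lam i * ⟪b i, x⟫ := by
    classical
    conv_lhs => rw [← b.sum_repr' x]
    simp [map_sum, hT, smul_smul, inner_sum, real_inner_smul_right, b.inner_eq_ite, mul_comm]
  refine le_of_sq_le_sq ?_ (by positivity)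
  rw [mul_pow, ← b.sum_sq_inner_right (T x), ← b.sum_sq_inner_right x, mul_sum]
  refine sum_le_sum fun i _ ↦ ?_
  rw [hcoord, mul_pow]
  rcases le_or_gt |lam i| t with hi | hi
  · gcongr ?_ * _
    exact sq_le_sq.2 (hi.trans (le_abs_self t))
  · simp [hx i hi]

lemma inner_eq_zero_of_mem_span {s : Set ι} {x : H} (hx : x ∈ Submodule.span ℝ (b '' s))
    {i : ι} (hi : i ∉ s) : ⟪b i, x⟫ = 0 := by
  classical
  have hle : Submodule.span ℝ (b '' s) ≤ (ℝ ∙ b i)ᗮ := by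
    rw [Submodule.span_le]
    rintro _ ⟨j, hj, rfl⟩
    rw [SetLike.mem_coe, Submodule.mem_orthogonal_singleton_iff_inner_right, b.inner_eq_ite,
      if_neg (by rintro rfl; exact hi hj)]
  exact Submodule.mem_orthogonal_singleton_iff_inner_right.1 (hle hx)

lemma finrank_span_image (s : Finset ι) : finrank ℝ (Submodule.span ℝ (b '' (s : Set ι))) = #s := by
  classical
  have hli := b.orthonormal.linearIndependent
  rw [← coe_image, finrank_span_finset_eq_card, card_image_of_injective _ hli.injective]
  rw [coe_image]
  exact hli.linearIndepOn_id.mono (Set.image_subset_range _ _)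

variable {S : Submodule ℝ H}

lemma le_of_card_lt_finrank_add_card (hT : ∀ i, T (b i) = lam i • b i)
    (hS : ∀ x ∈ S, c * ‖x‖ ^ 2 ≤ ⟪T x, x⟫)
    (hcard : Fintype.card ι < finrank ℝ S + #{i | lam i ≤ t}) : c ≤ t := by
  have : FiniteDimensional ℝ H := b.toBasis.finiteDimensional_of_finite
  set W := Submodule.span ℝ (b '' {i | lam i ≤ t})
  have hmeet : ¬ Disjoint S W := fun hdisj ↦ by
    have hdim := Submodule.finrank_add_finrank_le_of_disjoint hdisj
    have hWrank := finrank_span_image b {i | lam i ≤ t}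
    rw [coe_filter_univ] at hWrank
    rw [finrank_eq_card_basis b.toBasis, hWrank] at hdim
    omega
  obtain ⟨x, hxS, hxW, hx⟩ : ∃ x ∈ S, x ∈ W ∧ x ≠ 0 := by
    simpa [Submodule.disjoint_def] using hmeet
  have hupper : ⟪T x, x⟫ ≤ t * ‖x‖ ^ 2 :=
    inner_apply_self_le b hT fun i hi ↦ inner_eq_zero_of_mem_span b hxW (not_le.2 hi)
  exact le_of_mul_le_mul_right ((hS x hxS).trans hupper) (by positivity)

lemma ge_of_card_lt_finrank_add_card (hT : ∀ i, T (b i) = lam i • b i)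
    (hS : ∀ x ∈ S, ⟪T x, x⟫ ≤ c * ‖x‖ ^ 2)
    (hcard : Fintype.card ι < finrank ℝ S + #{i | t ≤ lam i}) : t ≤ c := by
  have := le_of_card_lt_finrank_add_card b (T := -T) (lam := -lam) (t := -t) (c := -c) (S := S)
    (by simp [hT]) (by simpa using hS) (by simpa using hcard)
  exact neg_le_neg_iff.1 this

end Rayleigh

/-! ### Projecting a perturbed operator -/

section Perturbation

open scoped RealInnerProductSpace

variable {H : Type*} [NormedAddCommGroup H] [InnerProductSpace ℝ H] [FiniteDimensional ℝ H]
  {G E : H →L[ℝ] H} {S V : Submodule ℝ H} {τ lo δ : ℝ}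

lemma inner_eq_inner_starProjection {K : Submodule ℝ H} {x : H} (hx : x ∈ K) (y : H) :
    ⟪x, y⟫ = ⟪x, K.starProjection y⟫ := by
  rw [← K.inner_starProjection_left_eq_right, Submodule.starProjection_eq_self_iff.2 hx]

lemma norm_starProjection_sub_self_le (hE : ‖E‖ ≤ τ) (hV : ∀ y ∈ V, (G + E) y ∈ V)
    (hVo : ∀ y ∈ Vᗮ, ‖(G + E) y‖ ≤ τ * ‖y‖) (x : H) :
    ‖V.starProjection (G x) - G x‖ ≤ 2 * τ * ‖x‖ := by
  set Q := Vᗮ.starProjection with hQ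
  have hQV {y : H} (hy : y ∈ V) : Q y = 0 := by
    rwa [hQ, Submodule.starProjection_apply_eq_zero_iff, Submodule.orthogonal_orthogonal]
  have hsplit : V.starProjection (G x) - G x = Q (E x) - Q ((G + E) (Q x)) := by
    have hQG (z : H) : V.starProjection z - z = - Q z := by
      rw [hQ, Submodule.starProjection_orthogonal]; simp
    have hx : x = V.starProjection x + Q x := by
      rw [hQ, Submodule.starProjection_orthogonal]; simp
    have hQT : Q ((G + E) x) = Q ((G + E) (Q x)) := by
      conv_lhs => rw [hx, map_add, map_add, hQV (hV _ (V.starProjection_apply_mem x)), zero_add]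
    rw [hQG, ← hQT]
    simp
  have hτ : 0 ≤ τ := (norm_nonneg E).trans hE
  rw [hsplit]
  calc ‖Q (E x) - Q ((G + E) (Q x))‖ ≤ ‖Q (E x)‖ + ‖Q ((G + E) (Q x))‖ := norm_sub_le _ _
    _ ≤ ‖E x‖ + ‖(G + E) (Q x)‖ := by
        gcongr <;> exact Submodule.norm_starProjection_apply_le _ _
    _ ≤ τ * ‖x‖ + τ * ‖x‖ := by
        gcongr
        · exact E.le_of_opNorm_le hE x
        · exact (hVo _ (Submodule.starProjection_apply_mem _ x)).trans
            (by gcongr; exact Submodule.norm_starProjection_apply_le _ _)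
    _ = 2 * τ * ‖x‖ := by ring

lemma exists_mem_apply_eq {T : H →L[ℝ] H} (hlo : 0 < lo) (hV : ∀ y ∈ V, T y ∈ V)
    (hVlo : ∀ y ∈ V, lo * ‖y‖ ≤ ‖T y‖) {x : H} (hx : x ∈ V) : ∃ y ∈ V, T y = x := by
  have hinj : Function.Injective (T.toLinearMap.restrict hV) := by
    rw [← LinearMap.ker_eq_bot, LinearMap.ker_eq_bot']
    intro y hy
    have hTy : T y = 0 := congrArg Subtype.val hy
    have := hVlo y y.2
    rw [hTy, norm_zero] at this
    exact Subtype.ext (norm_le_zero_iff.1 (nonpos_of_mul_nonpos_right this hlo))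
  obtain ⟨y, hy⟩ := LinearMap.surjective_of_injective hinj ⟨x, hx⟩
  exact ⟨y, y.2, congrArg Subtype.val hy⟩

-- If `y` is the preimage in `V` of `P_V x` under `G + E`, then
-- `‖P_V x‖² = ⟪G y, P_S x⟫ + ⟪y, P_V (E x)⟫`, and `y` is shorter than `P_V x` by a factor `lo`.
lemma norm_starProjection_le_add (hE : ‖E‖ ≤ τ) (hEs : E.IsSymmetric) (hGS : ∀ x, G x ∈ S)
    (hlo : 0 < lo) (hτlo : τ ≤ lo) (hV : ∀ y ∈ V, (G + E) y ∈ V)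
    (hVlo : ∀ y ∈ V, lo * ‖y‖ ≤ ‖(G + E) y‖) (x : H) :
    ‖V.starProjection x‖ ≤ 2 * ‖S.starProjection x‖ + lo⁻¹ * ‖V.starProjection (E x)‖ := by
  set z := V.starProjection x with hz
  obtain ⟨y, hy, hyz⟩ := exists_mem_apply_eq hlo hV hVlo (V.starProjection_apply_mem x)
  rw [← hz] at hyz
  have hy_le : lo * ‖y‖ ≤ ‖z‖ := hyz ▸ hVlo y hy
  have hGy : ‖G y‖ ≤ 2 * ‖z‖ := by
    calc ‖G y‖ = ‖z - E y‖ := by rw [← hyz]; simp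
      _ ≤ ‖z‖ + τ * ‖y‖ := (norm_sub_le _ _).trans (by gcongr; exact E.le_of_opNorm_le hE y)
      _ ≤ ‖z‖ + lo * ‖y‖ := by gcongr
      _ ≤ 2 * ‖z‖ := by linarith
  have hz_sq : ‖z‖ * ‖z‖ = ⟪G y, S.starProjection x⟫ + ⟪y, V.starProjection (E x)⟫ := by
    calc ‖z‖ * ‖z‖ = ⟪z, x⟫ := by
          rw [inner_eq_inner_starProjection (V.starProjection_apply_mem x), ← hz,
            real_inner_self_eq_norm_mul_norm]
      _ = ⟪G y, x⟫ + ⟪y, E x⟫ := by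
          rw [← hyz, _root_.add_apply, inner_add_left]
          congr 1
          exact hEs y x
      _ = _ := by
          rw [inner_eq_inner_starProjection (hGS y), inner_eq_inner_starProjection hy (E x)]
  rcases (norm_nonneg z).eq_or_lt with hz0 | hz0
  · rw [← hz0]; positivity
  refine le_of_mul_le_mul_right ?_ hz0
  calc ‖z‖ * ‖z‖ ≤ ‖G y‖ * ‖S.starProjection x‖ + ‖y‖ * ‖V.starProjection (E x)‖ :=
        hz_sq ▸ add_le_add (real_inner_le_norm _ _) (real_inner_le_norm _ _)
    _ ≤ 2 * ‖z‖ * ‖S.starProjection x‖ + lo⁻¹ * ‖z‖ * ‖V.starProjection (E x)‖ := by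
        gcongr
        rwa [le_inv_mul_iff₀ hlo]
    _ = _ := by ring

lemma norm_starProjection_le_of_pow (hE : ‖E‖ ≤ τ) (hEs : E.IsSymmetric) (hGS : ∀ x, G x ∈ S)
    (hlo : 0 < lo) (hτlo : 2 * τ ≤ lo) (hV : ∀ y ∈ V, (G + E) y ∈ V)
    (hVlo : ∀ y ∈ V, lo * ‖y‖ ≤ ‖(G + E) y‖) (hδ : 0 ≤ δ) {d : ℕ} {x : H}
    (hx : ∀ a < d, ‖S.starProjection ((E ^ a) x)‖ ≤ δ * τ ^ a) :
    ‖V.starProjection x‖ ≤ 4 * δ + (1 / 2) ^ d * ‖x‖ := by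
  have hτ : 0 ≤ τ := (norm_nonneg E).trans hE
  have hratio : lo⁻¹ * τ ≤ 1 / 2 := by
    rw [inv_mul_le_iff₀ hlo]
    linarith
  induction d generalizing x δ with
  | zero => simpa using (V.norm_starProjection_apply_le x).trans (by linarith)
  | succ d ih =>
    have hxE : ∀ a < d, ‖S.starProjection ((E ^ a) (E x))‖ ≤ δ * τ * τ ^ a := fun a ha ↦ by
      simpa [pow_succ, mul_assoc, mul_comm, mul_left_comm] using hx (a + 1) (by omega)
    have hEx : ‖V.starProjection (E x)‖ ≤ 4 * (δ * τ) + (1 / 2) ^ d * (τ * ‖x‖) :=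
      (ih (by positivity) hxE).trans (by gcongr; exact E.le_of_opNorm_le hE x)
    calc ‖V.starProjection x‖
        ≤ 2 * ‖S.starProjection x‖ + lo⁻¹ * ‖V.starProjection (E x)‖ :=
          norm_starProjection_le_add hE hEs hGS hlo (by linarith) hV hVlo x
      _ ≤ 2 * δ + lo⁻¹ * (4 * (δ * τ) + (1 / 2) ^ d * (τ * ‖x‖)) := by
          gcongr
          simpa using hx 0 (by omega)
      _ = 2 * δ + lo⁻¹ * τ * (4 * δ + (1 / 2) ^ d * ‖x‖) := by ring
      _ ≤ 2 * δ + 1 / 2 * (4 * δ + (1 / 2) ^ d * ‖x‖) := by gcongr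
      _ = 4 * δ + (1 / 2) ^ (d + 1) * ‖x‖ := by ring

lemma norm_starProjection_add_sub_le (hE : ‖E‖ ≤ τ) (hEs : E.IsSymmetric)
    (hGS : ∀ x, G x ∈ S) (hG0 : ∀ x ∈ Sᗮ, G x = 0) (hlo : 0 < lo) (hτlo : 2 * τ ≤ lo)
    (hV : ∀ y ∈ V, (G + E) y ∈ V) (hVlo : ∀ y ∈ V, lo * ‖y‖ ≤ ‖(G + E) y‖)
    (hVo : ∀ y ∈ Vᗮ, ‖(G + E) y‖ ≤ τ * ‖y‖) {A : ℕ} (hA : (1 / 2) ^ A ≤ δ) {x : H} (hx : ‖x‖ ≤ 1)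
    (hS : ∀ a ≤ A, ‖S.starProjection ((E ^ a) x)‖ ≤ δ * τ ^ a) :
    ‖V.starProjection ((G + E) x) - G x‖ ≤ 7 * τ * δ := by
  have hτ : 0 ≤ τ := (norm_nonneg E).trans hE
  have hδ : 0 ≤ δ := le_trans (by positivity) hA
  set h := S.starProjection x
  have hGh : G x = G h := by
    rw [← sub_eq_zero, ← map_sub]
    exact hG0 _ (S.sub_starProjection_mem_orthogonal x)
  have hhead : ‖V.starProjection (G h) - G h‖ ≤ 2 * τ * δ :=
    (norm_starProjection_sub_self_le hE hV hVo h).trans (by gcongr; simpa using hS 0 A.zero_le)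
  have htail : ‖V.starProjection (E x)‖ ≤ 4 * (δ * τ) + δ * (τ * 1) := by
    have hpow : ∀ a < A, ‖S.starProjection ((E ^ a) (E x))‖ ≤ δ * τ * τ ^ a := fun a ha ↦ by
      simpa [pow_succ, mul_assoc, mul_comm, mul_left_comm] using hS (a + 1) (by omega)
    refine (norm_starProjection_le_of_pow hE hEs hGS hlo hτlo hV hVlo (by positivity) hpow).trans ?_
    gcongr
    exact (E.le_of_opNorm_le hE x).trans (by gcongr)
  calc ‖V.starProjection ((G + E) x) - G x‖
      = ‖(V.starProjection (G h) - G h) + V.starProjection (E x)‖ := by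
        rw [_root_.add_apply, map_add, hGh]
        congr 1
        abel
    _ ≤ 2 * τ * δ + (4 * (δ * τ) + δ * (τ * 1)) := norm_add_le_of_le hhead htail
    _ = 7 * τ * δ := by ring

end Perturbation

section TopEigenspace

open scoped RealInnerProductSpace
open Module

variable {n : ℕ} {H : Type*} [NormedAddCommGroup H] [InnerProductSpace ℝ H]
  (b : OrthonormalBasis (Fin n) ℝ H) {lam : Fin n → ℝ}
  {G E : H →L[ℝ] H} {S : Submodule ℝ H} {τ μ δ : ℝ}

lemma card_filter_le_apply (hlam : Antitone lam) (i : Fin n) :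
    n - i ≤ #{j | lam j ≤ lam i} := by
  rw [← Fin.card_Ici]
  exact card_le_card fun j hj ↦ by simpa using hlam (mem_Ici.1 hj)

lemma card_filter_apply_le (hlam : Antitone lam) (i : Fin n) :
    i + 1 ≤ #{j | lam i ≤ lam j} := by
  rw [← Fin.card_Iic]
  exact card_le_card fun j hj ↦ by simpa using hlam (mem_Iic.1 hj)

lemma sub_le_eigenvalue_add (hlam : Antitone lam) (hb : ∀ i, (G + E) (b i) = lam i • b i)
    (hE : ‖E‖ ≤ τ) (hGμ : ∀ x ∈ S, μ * ‖x‖ ^ 2 ≤ ⟪G x, x⟫) {i : Fin n} (hi : i < finrank ℝ S) :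
    μ - τ ≤ lam i := by
  refine le_of_card_lt_finrank_add_card b (T := (G + E).toLinearMap) hb (S := S) (fun x hx ↦ ?_) ?_
  · have := (abs_le.1 (abs_inner_apply_self_le hE x)).1
    have := hGμ x hx
    simp only [ContinuousLinearMap.coe_coe, _root_.add_apply, inner_add_left]
    linarith
  · have := card_filter_le_apply hlam i
    rw [Fintype.card_fin]
    omega

variable [FiniteDimensional ℝ H]

lemma inner_apply_self_nonneg (hGS : ∀ x, G x ∈ S) (hG0 : ∀ x ∈ Sᗮ, G x = 0) (hμ : 0 ≤ μ)
    (hGμ : ∀ x ∈ S, μ * ‖x‖ ^ 2 ≤ ⟪G x, x⟫) (x : H) : 0 ≤ ⟪G x, x⟫ := by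
  have hGx : G x = G (S.starProjection x) := by
    rw [← sub_eq_zero, ← map_sub]
    exact hG0 _ (S.sub_starProjection_mem_orthogonal x)
  rw [inner_eq_inner_starProjection (hGS x), hGx]
  exact le_trans (by positivity) (hGμ _ (S.starProjection_apply_mem x))

lemma abs_eigenvalue_add_le (hlam : Antitone lam) (hb : ∀ i, (G + E) (b i) = lam i • b i)
    (hE : ‖E‖ ≤ τ) (hGS : ∀ x, G x ∈ S) (hG0 : ∀ x ∈ Sᗮ, G x = 0) (hμ : 0 ≤ μ)
    (hGμ : ∀ x ∈ S, μ * ‖x‖ ^ 2 ≤ ⟪G x, x⟫) {i : Fin n} (hi : finrank ℝ S ≤ i) :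
    |lam i| ≤ τ := by
  refine abs_le.2 ⟨?_, ?_⟩
  · refine le_of_card_lt_finrank_add_card b (T := (G + E).toLinearMap) hb (S := ⊤)
      (fun x _ ↦ ?_) ?_
    · have := (abs_le.1 (abs_inner_apply_self_le hE x)).1
      have := inner_apply_self_nonneg hGS hG0 hμ hGμ x
      simp only [ContinuousLinearMap.coe_coe, _root_.add_apply, inner_add_left]
      linarith
    · have := card_filter_le_apply hlam i
      rw [finrank_top, finrank_eq_card_basis b.toBasis, Fintype.card_fin]
      omega
  · refine ge_of_card_lt_finrank_add_card b (T := (G + E).toLinearMap) hb (S := Sᗮ)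
      (fun x hx ↦ ?_) ?_
    · simpa [hG0 x hx] using (abs_le.1 (abs_inner_apply_self_le hE x)).2
    · have := card_filter_apply_le hlam i
      have := S.finrank_add_finrank_orthogonal
      rw [finrank_eq_card_basis b.toBasis] at this
      omega

lemma norm_starProjection_topEigenspace_sub_le (hlam : Antitone lam)
    (hb : ∀ i, (G + E) (b i) = lam i • b i) (hE : ‖E‖ ≤ τ) (hEs : E.IsSymmetric)
    (hGS : ∀ x, G x ∈ S) (hG0 : ∀ x ∈ Sᗮ, G x = 0) (hμ : 0 < μ) (hτμ : 3 * τ ≤ μ)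
    (hGμ : ∀ x ∈ S, μ * ‖x‖ ^ 2 ≤ ⟪G x, x⟫) {A : ℕ} (hA : (1 / 2) ^ A ≤ δ) {x : H}
    (hx : ‖x‖ ≤ 1) (hS : ∀ a ≤ A, ‖S.starProjection ((E ^ a) x)‖ ≤ δ * τ ^ a) :
    ‖(Submodule.span ℝ (b '' {i | i < finrank ℝ S})).starProjection ((G + E) x) - G x‖ ≤
      7 * τ * δ := by
  set V := Submodule.span ℝ (b '' {i : Fin n | i < finrank ℝ S})
  have hτ : 0 ≤ τ := (norm_nonneg E).trans hE
  refine norm_starProjection_add_sub_le hE hEs hGS hG0 (lo := μ - τ) (by linarith) (by linarith)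
    (fun y hy ↦ ?_) (fun y hy ↦ ?_) (fun y hy ↦ ?_) hA hx hS
  · have hle : V ≤ V.comap (G + E).toLinearMap := by
      rw [Submodule.span_le]
      rintro _ ⟨i, hi, rfl⟩
      change (G + E) (b i) ∈ V
      rw [hb]
      exact V.smul_mem _ (Submodule.subset_span ⟨i, hi, rfl⟩)
    exact hle hy
  · have hRay : (μ - τ) * ‖y‖ ^ 2 ≤ ⟪(G + E) y, y⟫ :=
      le_inner_apply_self b (T := (G + E).toLinearMap) hb fun i hi ↦
        inner_eq_zero_of_mem_span b hy fun hik ↦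
          hi.not_ge (sub_le_eigenvalue_add b hlam hb hE hGμ hik)
    rcases (norm_nonneg y).eq_or_lt with hy0 | hy0
    · simp [← hy0]
    · refine le_of_mul_le_mul_right ?_ hy0
      calc (μ - τ) * ‖y‖ * ‖y‖ = (μ - τ) * ‖y‖ ^ 2 := by ring
        _ ≤ ‖(G + E) y‖ * ‖y‖ := hRay.trans (real_inner_le_norm _ _)
  · refine norm_apply_le b (T := (G + E).toLinearMap) hb hτ fun i hi ↦ ?_
    have hiS : i < finrank ℝ S := by
      by_contra hik
      exact hi.not_ge (abs_eigenvalue_add_le b hlam hb hE hGS hG0 hμ.le hGμ (not_lt.1 hik))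
    exact Submodule.inner_right_of_mem_orthogonal
      (Submodule.subset_span (Set.mem_image_of_mem b hiS)) hy

end TopEigenspace

/-! ### Operators factoring through a coercive map -/

section Factor

open scoped RealInnerProductSpace
open Module

variable {F H : Type*} [NormedAddCommGroup F] [InnerProductSpace ℝ F]
  [NormedAddCommGroup H] [InnerProductSpace ℝ H]
  {Z : F →ₗ[ℝ] H} {B : F →ₗ[ℝ] F} {r β : ℝ}

lemma finrank_range_of_norm_le (hr : 0 < r) (hZ : ∀ y, r * ‖y‖ ≤ ‖Z y‖) :
    finrank ℝ Z.range = finrank ℝ F := by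
  refine LinearMap.finrank_range_of_inj (LinearMap.ker_eq_bot.1 (LinearMap.ker_eq_bot'.2 ?_))
  intro y hy
  have hle := hZ y
  rw [hy, norm_zero] at hle
  exact norm_le_zero_iff.1 (nonpos_of_mul_nonpos_right hle hr)

variable [FiniteDimensional ℝ F] [FiniteDimensional ℝ H]

lemma adjoint_eq_zero_of_mem_orthogonal_range {x : H} (hx : x ∈ Z.rangeᗮ) : Z.adjoint x = 0 := by
  refine ext_inner_left ℝ fun y ↦ ?_
  rw [LinearMap.adjoint_inner_right, inner_zero_right]
  exact Submodule.inner_right_of_mem_orthogonal (LinearMap.mem_range_self Z y) hx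

lemma norm_le_norm_adjoint (hZ : ∀ y, r * ‖y‖ ≤ ‖Z y‖) {x : H}
    (hx : x ∈ Z.range) : r * ‖x‖ ≤ ‖Z.adjoint x‖ := by
  obtain ⟨y, rfl⟩ := hx
  rcases (norm_nonneg (Z y)).eq_or_lt with h0 | h0
  · simp [← h0]
  rcases le_or_gt r 0 with hr | hr
  · exact le_trans (mul_nonpos_of_nonpos_of_nonneg hr h0.le) (norm_nonneg _)
  refine le_of_mul_le_mul_right ?_ h0
  calc r * ‖Z y‖ * ‖Z y‖ = r * ⟪y, Z.adjoint (Z y)⟫ := by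
        rw [LinearMap.adjoint_inner_right, real_inner_self_eq_norm_mul_norm, mul_assoc]
    _ ≤ r * (‖y‖ * ‖Z.adjoint (Z y)‖) := by gcongr; exact real_inner_le_norm _ _
    _ = ‖Z.adjoint (Z y)‖ * (r * ‖y‖) := by ring
    _ ≤ ‖Z.adjoint (Z y)‖ * ‖Z y‖ := by gcongr; exact hZ y

lemma norm_starProjection_range_le (hZ : ∀ y, r * ‖y‖ ≤ ‖Z y‖) (x : H) :
    r * ‖Z.range.starProjection x‖ ≤ ‖Z.adjoint x‖ := by
  have hx : Z.adjoint x = Z.adjoint (Z.range.starProjection x) := by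
    rw [← sub_eq_zero, ← map_sub]
    exact adjoint_eq_zero_of_mem_orthogonal_range (Z.range.sub_starProjection_mem_orthogonal x)
  rw [hx]
  exact norm_le_norm_adjoint hZ (Submodule.starProjection_apply_mem _ x)

lemma le_inner_comp_adjoint_apply (hr : 0 ≤ r) (hZ : ∀ y, r * ‖y‖ ≤ ‖Z y‖) (hβ : 0 ≤ β)
    (hB : ∀ y, β * ‖y‖ ^ 2 ≤ ⟪B y, y⟫) {x : H} (hx : x ∈ Z.range) :
    β * r ^ 2 * ‖x‖ ^ 2 ≤ ⟪Z (B (Z.adjoint x)), x⟫ := by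
  rw [← LinearMap.adjoint_inner_right]
  calc β * r ^ 2 * ‖x‖ ^ 2 = β * (r * ‖x‖) ^ 2 := by ring
    _ ≤ β * ‖Z.adjoint x‖ ^ 2 := by gcongr; exact norm_le_norm_adjoint hZ hx
    _ ≤ _ := hB _

end Factor

/-! ### The cluster structure of the mean matrix -/

section ClusterMatrix

open scoped RealInnerProductSpace

variable {V K : Type*} [DecidableEq K]

/-- The incidence matrix of a partition `c`: its column `i` is the indicator of cluster `i`. -/
def clusterMatrix (c : V → K) : Matrix V K ℝ := Matrix.of fun v i ↦ if c v = i then 1 else 0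

lemma clusterMatrix_mulVec [Fintype K] (c : V → K) (y : K → ℝ) :
    clusterMatrix c *ᵥ y = y ∘ c := by
  ext v
  simp [clusterMatrix, mulVec, dotProduct]

variable [Fintype V] [DecidableEq V]

lemma clusterMatrix_transpose_mulVec_single (c : V → K) (u : V) :
    (clusterMatrix c)ᵀ *ᵥ Pi.single u 1 = Pi.single (c u) 1 := by
  ext i
  simp [clusterMatrix, Pi.single_apply, eq_comm]

variable [Fintype K]

/-- The squared Euclidean norm of the vector of cluster sums of row `u` of `N ^ a`. For `c = id`
the clusters are singletons, and this is the squared norm of the row itself. -/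
noncomputable def clusterEnergy (c : V → K) (N : Matrix V V ℝ) (a : ℕ) (u : V) : ℝ :=
  ∑ i, (N ^ a * clusterMatrix c) u i ^ 2

lemma clusterEnergy_zero (c : V → K) (N : Matrix V V ℝ) (u : V) : clusterEnergy c N 0 u = 1 := by
  simp [clusterEnergy, clusterMatrix]

lemma norm_sq_clusterMatrix_transpose_mulVec_pow (c : V → K) {N : Matrix V V ℝ} (hN : N.IsSymm)
    (a : ℕ) (u : V) :
    ‖WithLp.toLp 2 ((clusterMatrix c)ᵀ *ᵥ N ^ a *ᵥ Pi.single u 1)‖ ^ 2 = clusterEnergy c N a u := by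
  have hpow : (N ^ a)ᵀ = N ^ a := by rw [transpose_pow, hN.eq]
  have hrow : (clusterMatrix c)ᵀ *ᵥ N ^ a *ᵥ Pi.single u 1 = (N ^ a * clusterMatrix c) u := by
    rw [mulVec_mulVec, mulVec_single_one]
    ext i
    rw [col_apply, ← transpose_apply ((clusterMatrix c)ᵀ * N ^ a), transpose_mul, hpow,
      transpose_transpose]
  rw [EuclideanSpace.real_norm_sq_eq, hrow, clusterEnergy]

variable {n k : ℕ} {p q : ℝ}

lemma meanMatrix_eq (c : Fin n → Fin k) : meanMatrix n k p q c =
    clusterMatrix c * meanMatrix k k p q id * (clusterMatrix c)ᵀ := by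
  ext u v
  simp only [Matrix.mul_apply, clusterMatrix, of_apply, transpose_apply, ite_mul, mul_ite, one_mul,
    zero_mul, mul_one, mul_zero, sum_ite_eq, mem_univ, if_true]
  rfl

lemma meanMatrix_mulVec_single (c : Fin n → Fin k) (u : Fin n) :
    meanMatrix n k p q c *ᵥ Pi.single u 1 =
      clusterMatrix c *ᵥ meanMatrix k k p q id *ᵥ Pi.single (c u) 1 := by
  rw [meanMatrix_eq, ← mulVec_mulVec, clusterMatrix_transpose_mulVec_single, mulVec_mulVec]

lemma meanMatrix_id_mulVec (y : Fin k → ℝ) :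
    meanMatrix k k p q id *ᵥ y = (p - q) • y + fun _ ↦ q * ∑ i, y i := by
  ext i
  have hentry (j : Fin k) : meanMatrix k k p q id i j * y j =
      (if i = j then (p - q) * y j else 0) + q * y j := by
    simp only [meanMatrix, of_apply, id]
    split_ifs <;> ring
  simp [mulVec, dotProduct, hentry, sum_add_distrib, mul_sum]

lemma le_inner_meanMatrix_id (hq : 0 ≤ q) (y : EuclideanSpace ℝ (Fin k)) :
    (p - q) * ‖y‖ ^ 2 ≤ ⟪toEuclideanLin (meanMatrix k k p q id) y, y⟫ := by
  have hinner : ⟪toEuclideanLin (meanMatrix k k p q id) y, y⟫ =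
      (p - q) * ‖y‖ ^ 2 + q * (∑ i, y i) ^ 2 := by
    rw [real_inner_comm, ← coe_toEuclideanCLM_eq_toEuclideanLin, ContinuousLinearMap.coe_coe,
      inner_toEuclideanCLM, meanMatrix_id_mulVec, dotProduct_add, EuclideanSpace.real_norm_sq_eq]
    simp only [dotProduct, Pi.smul_apply, smul_eq_mul, ← sum_mul]
    rw [mul_left_comm (∑ i, y i), ← sq, mul_sum univ _ (p - q)]
    exact congrArg₂ _ (sum_congr rfl fun i _ ↦ by ring) rfl
  rw [hinner]
  exact le_add_of_nonneg_right (by positivity)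

lemma norm_clusterMatrix_sq (c : Fin n → Fin k) (y : EuclideanSpace ℝ (Fin k)) :
    ‖toEuclideanLin (clusterMatrix c) y‖ ^ 2 = ∑ i, clusterSize c i * y i ^ 2 := by
  rw [EuclideanSpace.real_norm_sq_eq, ofLp_toLpLin, toLin'_apply, clusterMatrix_mulVec]
  simp_rw [clusterSize, card_eq_sum_ones, Nat.cast_sum, sum_mul, sum_filter]
  rw [sum_comm]
  simp

lemma le_norm_clusterMatrix {c : Fin n → Fin k} {m : ℝ} (hm : 0 ≤ m)
    (hc : ∀ i, m ≤ clusterSize c i) (y : EuclideanSpace ℝ (Fin k)) :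
    √m * ‖y‖ ≤ ‖toEuclideanLin (clusterMatrix c) y‖ := by
  refine le_of_sq_le_sq ?_ (norm_nonneg _)
  rw [mul_pow, Real.sq_sqrt hm, norm_clusterMatrix_sq, EuclideanSpace.real_norm_sq_eq, mul_sum]
  gcongr with i
  exact hc i

lemma le_norm_meanMatrix_sub {c : Fin n → Fin k} {m : ℝ} (hm : 0 ≤ m)
    (hc : ∀ i, m ≤ clusterSize c i) (hpq : q ≤ p) {u w : Fin n} (huw : c u ≠ c w) :
    (p - q) * √(2 * m) ≤
      ‖WithLp.toLp 2 (meanMatrix n k p q c *ᵥ (Pi.single u 1 - Pi.single w 1))‖ := by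
  set y : Fin k → ℝ := Pi.single (c u) 1 - Pi.single (c w) 1 with hy
  have hy_norm : ‖WithLp.toLp 2 y‖ = √2 := by
    have hsq : y ⬝ᵥ y = 2 := by
      simp only [hy, sub_dotProduct, single_dotProduct, one_mul, Pi.sub_apply, Pi.single_eq_same,
        Pi.single_eq_of_ne huw, Pi.single_eq_of_ne huw.symm]
      norm_num
    rw [EuclideanSpace.norm_eq, ← hsq]
    simp [dotProduct, sq]
  have hG : meanMatrix n k p q c *ᵥ (Pi.single u 1 - Pi.single w 1) =
      clusterMatrix c *ᵥ ((p - q) • y) := by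
    have hy_sum : ∑ i, y i = 0 := by simp [hy]
    rw [mulVec_sub, meanMatrix_mulVec_single c u, meanMatrix_mulVec_single c w, ← mulVec_sub,
      ← mulVec_sub, ← hy, meanMatrix_id_mulVec, hy_sum, mul_zero]
    exact congrArg _ (add_zero _)
  calc (p - q) * √(2 * m) = √m * ‖WithLp.toLp 2 ((p - q) • y)‖ := by
        rw [WithLp.toLp_smul, norm_smul, hy_norm, Real.norm_of_nonneg (sub_nonneg.2 hpq),
          Real.sqrt_mul zero_le_two]
        ring
    _ ≤ _ := le_norm_clusterMatrix hm hc _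
    _ = _ := by rw [hG]; rfl

end ClusterMatrix

/-! ### The vanilla-SVD representation -/

section SvdClearCut

open scoped RealInnerProductSpace
open Module

variable {n k : ℕ}

lemma starProjection_span_image_eq_sum {ι H : Type*} [Fintype ι] [NormedAddCommGroup H]
    [InnerProductSpace ℝ H] (b : OrthonormalBasis ι ℝ H) (s : Finset ι)
    [(Submodule.span ℝ (b '' s)).HasOrthogonalProjection] (x : H) :
    (Submodule.span ℝ (b '' s)).starProjection x = ∑ i ∈ s, ⟪b i, x⟫ • b i := by
  classical
  refine Submodule.eq_starProjection_of_mem_of_inner_eq_zero (Submodule.sum_mem _ fun i hi ↦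
    Submodule.smul_mem _ _ (Submodule.subset_span (Set.mem_image_of_mem b hi))) fun w hw ↦ ?_
  induction hw using Submodule.span_induction with
  | mem w hw =>
    obtain ⟨j, hj, rfl⟩ := hw
    simp_rw [inner_sub_left, sum_inner, real_inner_smul_left, b.inner_eq_ite]
    simp [mem_coe.1 hj, real_inner_comm]
  | zero => simp
  | add y z _ _ hy hz => rw [inner_add_right, hy, hz, add_zero]
  | smul t y _ hy => rw [real_inner_smul_right, hy, mul_zero]

namespace IsSpectralDecomp

variable {A : Matrix (Fin n) (Fin n) ℝ} {lam : Fin n → ℝ} {v : Fin n → Fin n → ℝ}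

lemma exists_orthonormalBasis (h : IsSpectralDecomp A lam v) :
    ∃ b : OrthonormalBasis (Fin n) ℝ (EuclideanSpace ℝ (Fin n)),
      ∀ i, b i = WithLp.toLp 2 (v i) := by
  have ho : Orthonormal ℝ fun i ↦ WithLp.toLp 2 (v i) := by
    rw [orthonormal_iff_ite]
    intro i j
    rw [EuclideanSpace.inner_toLp_toLp, star_trivial, dotProduct_comm, h.2.1]
  refine ⟨OrthonormalBasis.mk ho ?_, fun i ↦ by rw [OrthonormalBasis.coe_mk]⟩
  exact (ho.linearIndependent.span_eq_top_of_card_eq_finrank' (by simp)).ge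

lemma mulVec_eq (h : IsSpectralDecomp A lam v) (i : Fin n) : A *ᵥ v i = lam i • v i := by
  rw [h.2.2, sum_mulVec]
  simp [smul_mulVec, vecMulVec_mulVec, h.2.1]

lemma toLp_projTop_mulVec {b : OrthonormalBasis (Fin n) ℝ (EuclideanSpace ℝ (Fin n))}
    (hb : ∀ i, b i = WithLp.toLp 2 (v i)) (x : Fin n → ℝ) :
    WithLp.toLp 2 (projTop k v *ᵥ x) =
      (Submodule.span ℝ (b '' {i | (i : ℕ) < k})).starProjection (WithLp.toLp 2 x) := by
  have hset : {i : Fin n | (i : ℕ) < k} = ({i : Fin n | (i : ℕ) < k} : Finset (Fin n)) := by simp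
  rw [hset, starProjection_span_image_eq_sum, projTop, sum_mulVec, WithLp.toLp_sum]
  refine sum_congr rfl fun i _ ↦ ?_
  rw [vecMulVec_mulVec, op_smul_eq_smul, WithLp.toLp_smul, hb, EuclideanSpace.inner_toLp_toLp,
    star_trivial, dotProduct_comm]

end IsSpectralDecomp

variable {p q : ℝ} {c : Fin n → Fin k} {N : Matrix (Fin n) (Fin n) ℝ} {lam : Fin n → ℝ}
  {v : Fin n → Fin n → ℝ} {m τ : ℝ} {A : ℕ}

lemma adjoint_toEuclideanLin_clusterMatrix_apply (x : EuclideanSpace ℝ (Fin n)) :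
    (toEuclideanLin (clusterMatrix c)).adjoint x =
      WithLp.toLp 2 ((clusterMatrix c)ᵀ *ᵥ x.ofLp) := by
  rw [← toEuclideanLin_conjTranspose_eq_adjoint]
  rfl

lemma toEuclideanCLM_meanMatrix_apply (x : EuclideanSpace ℝ (Fin n)) :
    toEuclideanCLM (𝕜 := ℝ) (meanMatrix n k p q c) x =
      toEuclideanLin (clusterMatrix c) (toEuclideanLin (meanMatrix k k p q id)
        ((toEuclideanLin (clusterMatrix c)).adjoint x)) := by
  refine WithLp.ofLp_injective 2 ?_
  rw [ofLp_toEuclideanCLM, meanMatrix_eq, ← mulVec_mulVec, ← mulVec_mulVec,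
    adjoint_toEuclideanLin_clusterMatrix_apply]
  rfl

lemma norm_starProjection_range_clusterMatrix_pow_le (hm : 0 < m)
    (hc : ∀ i, m ≤ clusterSize c i) (hN : N.IsSymm) (hτ : 0 ≤ τ) {a : ℕ} {u : Fin n}
    (hs : clusterEnergy c N a u ≤ τ ^ (2 * a)) :
    ‖(toEuclideanLin (clusterMatrix c)).range.starProjection
      ((toEuclideanCLM (𝕜 := ℝ) N ^ a) (WithLp.toLp 2 (Pi.single u 1)))‖ ≤ 1 / √m * τ ^ a := by
  rw [one_div_mul_eq_div, le_div_iff₀' (Real.sqrt_pos.2 hm)]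
  refine (norm_starProjection_range_le (le_norm_clusterMatrix hm.le hc) _).trans
    (le_of_sq_le_sq ?_ (pow_nonneg hτ a))
  rw [← map_pow, toEuclideanCLM_toLp, adjoint_toEuclideanLin_clusterMatrix_apply,
    norm_sq_clusterMatrix_transpose_mulVec_pow c hN, ← pow_mul, mul_comm a]
  exact hs

lemma norm_projTop_mulVec_column_sub_le (hq : 0 ≤ q) (hpq : q < p) (hm : 0 < m)
    (hc : ∀ i, m ≤ clusterSize c i) (hN : N.IsSymm) (hτ : specNorm N ≤ τ)
    (hτm : 3 * τ ≤ (p - q) * m) (hA : (1 / 2) ^ A ≤ 1 / √m) {u : Fin n}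
    (hs : ∀ a ≤ A, clusterEnergy c N a u ≤ τ ^ (2 * a))
    (hv : IsSpectralDecomp (meanMatrix n k p q c + N) lam v) :
    ‖WithLp.toLp 2 (projTop k v *ᵥ column (meanMatrix n k p q c + N) u -
      column (meanMatrix n k p q c) u)‖ ≤ 7 * τ * (1 / √m) := by
  obtain ⟨b, hb⟩ := hv.exists_orthonormalBasis
  have hZ := le_norm_clusterMatrix hm.le hc
  have heig (i) : (toEuclideanCLM (𝕜 := ℝ) (meanMatrix n k p q c) + toEuclideanCLM (𝕜 := ℝ) N)
      (b i) = lam i • b i := by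
    rw [← map_add, hb, toEuclideanCLM_toLp, hv.mulVec_eq, WithLp.toLp_smul]
  have hsymm : (toEuclideanCLM (𝕜 := ℝ) N : EuclideanSpace ℝ (Fin n) →ₗ[ℝ] _).IsSymmetric := by
    rwa [coe_toEuclideanCLM_eq_toEuclideanLin, isSymmetric_toEuclideanLin_iff, IsHermitian,
      conjTranspose_eq_transpose_of_trivial]
  have hrange (x) : toEuclideanCLM (𝕜 := ℝ) (meanMatrix n k p q c) x ∈
      (toEuclideanLin (clusterMatrix c)).range := by
    rw [toEuclideanCLM_meanMatrix_apply]
    exact LinearMap.mem_range_self _ _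
  have hkernel (x) (hx : x ∈ (toEuclideanLin (clusterMatrix c)).rangeᗮ) :
      toEuclideanCLM (𝕜 := ℝ) (meanMatrix n k p q c) x = 0 := by
    rw [toEuclideanCLM_meanMatrix_apply, adjoint_eq_zero_of_mem_orthogonal_range hx, map_zero,
      map_zero]
  have hcoercive (x) (hx : x ∈ (toEuclideanLin (clusterMatrix c)).range) :
      (p - q) * m * ‖x‖ ^ 2 ≤ ⟪toEuclideanCLM (𝕜 := ℝ) (meanMatrix n k p q c) x, x⟫ := by
    rw [toEuclideanCLM_meanMatrix_apply]
    simpa only [Real.sq_sqrt hm.le] using le_inner_comp_adjoint_apply (Real.sqrt_nonneg m) hZ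
      (sub_pos.2 hpq).le (le_inner_meanMatrix_id hq) hx
  have hmain := norm_starProjection_topEigenspace_sub_le b hv.1 heig hτ hsymm hrange hkernel
    (mul_pos (sub_pos.2 hpq) hm) hτm hcoercive hA (x := WithLp.toLp 2 (Pi.single u 1)) (by simp)
    fun a ha ↦ norm_starProjection_range_clusterMatrix_pow_le hm hc hN
      ((norm_nonneg _).trans hτ) (hs a ha)
  rwa [finrank_range_of_norm_le (Real.sqrt_pos.2 hm) hZ, finrank_euclideanSpace_fin, ← map_add,
    toEuclideanCLM_toLp, toEuclideanCLM_toLp, ← IsSpectralDecomp.toLp_projTop_mulVec hb,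
    mulVec_single_one, mulVec_single_one, ← WithLp.toLp_sub] at hmain

/-- The conclusion of `vanilla_svd_clear_cut` for one partition `c` and one noise matrix `N`: the
distances between the columns of `P_{Ĝ_k} Ĝ`, where `Ĝ = G + N`, separate the clusters. -/
def SvdClearCut (p q : ℝ) (c : Fin n → Fin k) (N : Matrix (Fin n) (Fin n) ℝ) : Prop :=
  ∀ (lam : Fin n → ℝ) (v : Fin n → Fin n → ℝ),
    IsSpectralDecomp (meanMatrix n k p q c + N) lam v →
    ∀ u w : Fin n,
      (c u = c w →
        SBM.enorm ((projTop k v).mulVec (column (meanMatrix n k p q c + N) u) -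
            (projTop k v).mulVec (column (meanMatrix n k p q c + N) w)) ≤
          0.8 * (p - q) * Real.sqrt ((n : ℝ) / k) / 4) ∧
      (c u ≠ c w →
        0.8 * (p - q) * Real.sqrt ((n : ℝ) / k) ≤
          SBM.enorm ((projTop k v).mulVec (column (meanMatrix n k p q c + N) u) -
            (projTop k v).mulVec (column (meanMatrix n k p q c + N) w)))

lemma enorm_eq_norm_toLp (x : Fin n → ℝ) : SBM.enorm x = ‖WithLp.toLp 2 x‖ := by
  simp [SBM.enorm, EuclideanSpace.norm_eq]

lemma svdClearCut_of_norm_column_sub_le (hpq : q ≤ p)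
    (hc : ∀ i, (n : ℝ) / (2 * k) ≤ clusterSize c i)
    (herr : ∀ lam v, IsSpectralDecomp (meanMatrix n k p q c + N) lam v → ∀ u,
      ‖WithLp.toLp 2 (projTop k v *ᵥ column (meanMatrix n k p q c + N) u -
        column (meanMatrix n k p q c) u)‖ ≤ 0.1 * (p - q) * √(n / k)) :
    SvdClearCut p q c N := by
  intro lam v hv u w
  set X := WithLp.toLp 2 (projTop k v *ᵥ column (meanMatrix n k p q c + N) u -
    projTop k v *ᵥ column (meanMatrix n k p q c + N) w) with hX
  set Y := WithLp.toLp 2 (meanMatrix n k p q c *ᵥ (Pi.single u 1 - Pi.single w 1)) with hY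
  have hXY : ‖X - Y‖ ≤ 0.2 * (p - q) * √(n / k) := by
    rw [hX, hY, mulVec_sub, mulVec_single_one, mulVec_single_one, ← WithLp.toLp_sub,
      sub_sub_sub_comm, WithLp.toLp_sub]
    exact (norm_sub_le _ _).trans ((add_le_add (herr lam v hv u) (herr lam v hv w)).trans_eq
      (by ring))
  rw [enorm_eq_norm_toLp, ← hX]
  refine ⟨fun huw ↦ ?_, fun huw ↦ ?_⟩
  · have hY_zero : Y = 0 := by
      rw [hY, mulVec_sub, meanMatrix_mulVec_single c u, meanMatrix_mulVec_single c w, huw,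
        sub_self, WithLp.toLp_zero]
    rw [hY_zero, sub_zero] at hXY
    linarith
  · have hY_le : (p - q) * √(n / k) ≤ ‖Y‖ := by
      simpa only [mul_div_mul_left (n : ℝ) k two_ne_zero, ← mul_div_assoc] using
        le_norm_meanMatrix_sub (by positivity) hc hpq huw
    have htri := norm_sub_norm_le Y X
    rw [norm_sub_rev] at htri
    linarith

lemma svdClearCut_of_clusterEnergy_le (hq : 0 ≤ q) (hpq : q < p) (hn : 0 < n) (hk : 0 < k)
    (hc : ∀ i, (n : ℝ) / (2 * k) ≤ clusterSize c i) (hN : N.IsSymm) (hτ : specNorm N ≤ τ)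
    (hτn : 100 * τ ≤ (p - q) * (n / k)) (hA : (n : ℝ) ≤ 4 ^ A)
    (hs : ∀ a ≤ A, ∀ u, clusterEnergy c N a u ≤ τ ^ (2 * a)) : SvdClearCut p q c N := by
  set m : ℝ := n / (2 * k) with hm_def
  have hm : 0 < m := by positivity
  have hnk : (n : ℝ) / k = 2 * m := by rw [hm_def]; field_simp
  have hτm : 50 * τ ≤ (p - q) * m := by rw [hnk] at hτn; linarith
  have hAm : (1 / 2 : ℝ) ^ A ≤ 1 / √m := by
    have hmn : m ≤ n := div_le_self n.cast_nonneg (by exact_mod_cast Nat.mul_pos two_pos hk)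
    rw [_root_.one_div_pow]
    refine one_div_le_one_div_of_le (Real.sqrt_pos.2 hm) ((Real.sqrt_le_left (by positivity)).2 ?_)
    rw [pow_right_comm]
    exact hmn.trans (hA.trans_eq (by norm_num))
  have herr : 7 * τ * (1 / √m) ≤ 0.1 * (p - q) * √(2 * m) := by
    have hsqrt : (1.4 : ℝ) ≤ √2 := Real.le_sqrt_of_sq_le (by norm_num)
    rw [mul_one_div, div_le_iff₀ (Real.sqrt_pos.2 hm)]
    calc 7 * τ ≤ 0.1 * ((p - q) * (1.4 * m)) := by linarith
      _ ≤ 0.1 * ((p - q) * (√2 * m)) := by gcongr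
      _ = 0.1 * (p - q) * √(2 * m) * √m := by
        rw [Real.sqrt_mul zero_le_two]
        linear_combination -0.1 * ((p - q) * √2) * Real.sq_sqrt hm.le
  refine svdClearCut_of_norm_column_sub_le hpq.le hc fun lam v hv u ↦ ?_
  rw [hnk]
  exact (norm_projTop_mulVec_column_sub_le hq hpq hm hc hN hτ
    (by linarith [(norm_nonneg _).trans hτ]) hAm (fun a ha ↦ hs a ha u) hv).trans herr

end SvdClearCut

/-! ### Counting walks by the number of visited vertices -/

section Walks

variable {V ι : Type*} [DecidableEq V] [Fintype ι]

/-- The number of vertices, other than the root `u`, visited by `x`. -/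
def numVisited (u : V) (x : ι → V) : ℕ := #((univ.image x).erase u)

lemma numVisited_option (u y : V) (x : ι → V) :
    numVisited u (fun i : Option ι ↦ i.elim y x) =
      if y ∈ insert u (univ.image x) then numVisited u x else numVisited u x + 1 := by
  have himage : univ.image (fun i : Option ι ↦ i.elim y x) = insert y (univ.image x) := by
    ext w
    simp [Option.exists, eq_comm]
  rw [numVisited, himage]
  split_ifs with hy
  · rcases mem_insert.1 hy with rfl | hy
    · rw [erase_insert_eq_erase, numVisited]
    · rw [insert_eq_of_mem hy, numVisited]
  · rw [mem_insert, not_or] at hy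
    rw [erase_insert_of_ne hy.1, card_insert_of_notMem (mt mem_of_mem_erase hy.2), numVisited]

lemma numVisited_comp_equiv {κ : Type*} [Fintype κ] (u : V) (x : ι → V) (e : κ ≃ ι) :
    numVisited u (x ∘ e) = numVisited u x := by
  classical
  rw [numVisited, numVisited, ← image_image, image_univ_equiv]

variable [Fintype V]

lemma sum_inv_card_pow_numVisited_option_le [Nonempty V] (u : V) (x : ι → V) :
    ∑ y, (Fintype.card V : ℝ)⁻¹ ^ numVisited u (fun i : Option ι ↦ i.elim y x) ≤
      (Fintype.card ι + 2) * (Fintype.card V : ℝ)⁻¹ ^ numVisited u x := by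
  set r : ℝ := (Fintype.card V : ℝ)⁻¹
  have hstep (y : V) : r ^ numVisited u (fun i : Option ι ↦ i.elim y x) ≤
      r ^ numVisited u x * ((if y ∈ insert u (univ.image x) then 1 else 0) + r) := by
    rw [numVisited_option]
    split_ifs
    · exact le_mul_of_one_le_right (by positivity) (le_add_of_nonneg_right (by positivity))
    · rw [pow_succ, zero_add]
  have hcard : (#(insert u (univ.image x)) : ℝ) ≤ Fintype.card ι + 1 := by
    exact_mod_cast (card_insert_le _ _).trans (Nat.succ_le_succ card_image_le)
  calc _ ≤ ∑ y, r ^ numVisited u x * ((if y ∈ insert u (univ.image x) then 1 else 0) + r) :=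
        sum_le_sum fun y _ ↦ hstep y
    _ = r ^ numVisited u x * (#(insert u (univ.image x)) + 1) := by
        rw [← mul_sum, sum_add_distrib, sum_boole, filter_univ_mem, sum_const, nsmul_eq_mul,
          card_univ, mul_inv_cancel₀ (by positivity)]
    _ ≤ r ^ numVisited u x * (Fintype.card ι + 1 + 1) := by gcongr
    _ = _ := by ring

lemma sum_inv_card_pow_numVisited_le [Nonempty V] (u : V) (ι : Type*) [Fintype ι] [DecidableEq ι] :
    ∑ x : ι → V, (Fintype.card V : ℝ)⁻¹ ^ numVisited u x ≤ (Fintype.card ι + 1).factorial := by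
  revert ‹DecidableEq ι›
  refine Fintype.induction_empty_option (P := fun κ _ ↦ ∀ [DecidableEq κ], ∑ x : κ → V,
    (Fintype.card V : ℝ)⁻¹ ^ numVisited u x ≤ (Fintype.card κ + 1).factorial) ?_ ?_ ?_ ι
  · intro α β _ e ih _
    classical
    let _ := Fintype.ofEquiv β e.symm
    rw [← Fintype.card_congr e, ← (e.arrowCongr (Equiv.refl V)).sum_comp]
    refine le_trans (le_of_eq (sum_congr rfl fun x _ ↦ ?_)) ih
    rw [← numVisited_comp_equiv u x e.symm]
    rfl
  · intro _
    simp [numVisited]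
  · intro α _ ih _
    classical
    have hsymm (y : V) (x : α → V) :
        Equiv.piOptionEquivProd.symm (y, x) = fun i : Option α ↦ i.elim y x := by
      ext (_ | _) <;> rfl
    rw [← (Equiv.piOptionEquivProd (β := fun _ : Option α ↦ V)).symm.sum_comp,
      Fintype.sum_prod_type_right]
    simp only [hsymm]
    refine (sum_le_sum fun x _ ↦ sum_inv_card_pow_numVisited_option_le u x).trans ?_
    rw [← mul_sum, Fintype.card_option, Nat.factorial_succ (Fintype.card α + 1)]
    push_cast
    rw [add_assoc (Fintype.card α : ℝ), one_add_one_eq_two]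
    gcongr
    exact ih

end Walks

section ParentEdge

variable {V ι : Type*} {u : V}

/-- Given a forest on `ι` with parent function `par`, the edge along which the labelling `x`
arrives at `x i`. The parent of a root of the forest is labelled by `u`. -/
def parentEdge (par : ι → Option ι) (u : V) (x : ι → V) (i : ι) : Sym2 V :=
  s((par i).elim u x, x i)

variable {par : ι → Option ι} {rank : ι → ℕ} {x : ι → V}

lemma rank_lt_of_parent_eq (hpar : ∀ i, ∀ j ∈ par i, rank j < rank i) {i j : ι}
    {v : V} (hj : ∀ l, x l = v → rank j ≤ rank l) (hv : v ≠ u) (hij : (par i).elim u x = v) :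
    rank j < rank i := by
  cases hi : par i with
  | none => exact absurd (by simpa [hi] using hij) hv.symm
  | some l => exact (hj l (by simpa [hi] using hij)).trans_lt (hpar i l hi)

/-- Each visited vertex is charged to the edge of its first visit. Two such edges differ, since
one of the two vertices would be the parent of the other and conversely. -/
lemma numVisited_le_card_parentEdge [Fintype ι] [DecidableEq V]
    (hpar : ∀ i, ∀ j ∈ par i, rank j < rank i) :
    numVisited u x ≤ #(univ.image (parentEdge par u x)) := by
  have hfirst (v : V) (hv : v ∈ (univ.image x).erase u) :
      ∃ i, x i = v ∧ ∀ l, x l = v → rank i ≤ rank l := by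
    obtain ⟨i₀, -, hi₀⟩ := mem_image.1 (mem_of_mem_erase hv)
    obtain ⟨i, hi, hmin⟩ := exists_min_image (univ.filter (x · = v)) rank ⟨i₀, by simp [hi₀]⟩
    exact ⟨i, (mem_filter.1 hi).2, fun l hl ↦ hmin l (by simp [hl])⟩
  choose f hf hf_min using hfirst
  rw [numVisited, ← card_attach]
  refine card_le_card_of_injOn (fun v ↦ parentEdge par u x (f v v.2))
    (fun v _ ↦ mem_coe.2 (mem_image_of_mem _ (mem_univ _))) fun v _ w _ hvw ↦ ?_
  have hlt (v w : (univ.image x).erase u) (h : (par (f v v.2)).elim u x = w) :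
      rank (f w w.2) < rank (f v v.2) :=
    rank_lt_of_parent_eq hpar (hf_min w w.2) (ne_of_mem_erase w.2) h
  simp only [parentEdge, hf] at hvw
  rcases Sym2.eq_iff.1 hvw with h | ⟨hv, hw⟩
  · exact Subtype.ext h.2
  · exact absurd (hlt v w hv) (hlt w v hw.symm).asymm

end ParentEdge

/-! ### Moments of sparse noise -/

section SparseNoise

lemma two_mul_card_image_le {E : Type*} [DecidableEq E] {ι : Type*} [Fintype ι] {e : ι → E}
    (he : ∀ t, #{i | e i = t} ≠ 1) : 2 * #(univ.image e) ≤ Fintype.card ι := by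
  rw [← card_univ, card_eq_sum_card_image e, mul_comm, ← smul_eq_mul, ← sum_const]
  refine sum_le_sum fun t ht ↦ ?_
  obtain ⟨i, -, hi⟩ := mem_image.1 ht
  have hpos : 0 < #{i | e i = t} := card_pos.2 ⟨i, by simp [hi]⟩
  exact lt_of_le_of_ne hpos (he t).symm

variable {Ω E : Type*} [MeasurableSpace Ω] {μ : Measure Ω} {ξ : E → Ω → ℝ} {p : ℝ}

/-- Independent centred random variables, bounded by `1`, of second moment at most `p`. -/
structure IsSparseNoise (ξ : E → Ω → ℝ) (p : ℝ) (μ : Measure Ω) : Prop where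
  measurable (e : E) : Measurable (ξ e)
  iIndepFun : iIndepFun ξ μ
  abs_le_one (e : E) (ω : Ω) : |ξ e ω| ≤ 1
  integral_eq_zero (e : E) : ∫ ω, ξ e ω ∂μ = 0
  integral_sq_le (e : E) : ∫ ω, ξ e ω ^ 2 ∂μ ≤ p

namespace IsSparseNoise

lemma integrable_prod [IsFiniteMeasure μ] (hξ : IsSparseNoise ξ p μ) {ι : Type*}
    (s : Finset ι) (e : ι → E) : Integrable (fun ω ↦ ∏ i ∈ s, ξ (e i) ω) μ := by
  refine .of_bound (s.measurable_fun_prod fun i _ ↦ hξ.measurable _).aestronglyMeasurable 1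
    (.of_forall fun ω ↦ ?_)
  rw [Real.norm_eq_abs, abs_prod]
  exact prod_le_one (fun i _ ↦ abs_nonneg _) fun i _ ↦ hξ.abs_le_one _ _

lemma abs_integral_pow_le [IsFiniteMeasure μ] (hξ : IsSparseNoise ξ p μ) (e : E) {m : ℕ}
    (hm : 2 ≤ m) : |∫ ω, ξ e ω ^ m ∂μ| ≤ p := by
  have hsq_int : Integrable (fun ω ↦ ξ e ω ^ 2) μ := by
    simpa using hξ.integrable_prod (univ : Finset (Fin 2)) fun _ ↦ e
  calc |∫ ω, ξ e ω ^ m ∂μ| ≤ ∫ ω, |ξ e ω ^ m| ∂μ := abs_integral_le_integral_abs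
    _ ≤ ∫ ω, ξ e ω ^ 2 ∂μ := by
        refine integral_mono_of_nonneg (.of_forall fun ω ↦ abs_nonneg _) hsq_int
          (.of_forall fun ω ↦ ?_)
        simp only [abs_pow]
        rw [← sq_abs (ξ e ω)]
        exact pow_le_pow_of_le_one (abs_nonneg _) (hξ.abs_le_one e ω) hm
    _ ≤ p := hξ.integral_sq_le e

variable [DecidableEq E] {ι : Type*} [Fintype ι] {e : ι → E}

lemma integral_prod_eq [Fintype E] (hξ : IsSparseNoise ξ p μ) (e : ι → E) :
    ∫ ω, ∏ i, ξ (e i) ω ∂μ = ∏ t, ∫ ω, ξ t ω ^ #{i | e i = t} ∂μ := by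
  have hfiber (ω : Ω) : ∏ i, ξ (e i) ω = ∏ t, ξ t ω ^ #{i | e i = t} := by
    rw [← prod_fiberwise univ e]
    refine prod_congr rfl fun t _ ↦ prod_eq_pow_card fun i hi ↦ ?_
    rw [(mem_filter.1 hi).2]
  simp_rw [hfiber]
  have hindep : ProbabilityTheory.iIndepFun (fun t ω ↦ ξ t ω ^ #{i | e i = t}) μ :=
    hξ.iIndepFun.comp (fun t y ↦ y ^ #{i | e i = t}) fun t ↦ by fun_prop
  exact hindep.integral_fun_prod_eq_prod_integral
    fun t ↦ ((hξ.measurable t).pow_const _).aestronglyMeasurable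

lemma abs_integral_prod_le_pow_card_image [Finite E] [IsProbabilityMeasure μ]
    (hξ : IsSparseNoise ξ p μ) (he : ∀ t, #{i | e i = t} ≠ 1) :
    |∫ ω, ∏ i, ξ (e i) ω ∂μ| ≤ p ^ #(univ.image e) := by
  cases nonempty_fintype E
  rw [hξ.integral_prod_eq, abs_prod, ← prod_const, ← univ_inter (univ.image e), ← prod_ite_mem]
  refine prod_le_prod (fun t _ ↦ abs_nonneg _) fun t _ ↦ ?_
  split_ifs with ht
  · obtain ⟨i, -, hi⟩ := mem_image.1 ht
    have hpos : 0 < #{i | e i = t} := card_pos.2 ⟨i, by simp [hi]⟩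
    exact hξ.abs_integral_pow_le t (lt_of_le_of_ne hpos (he t).symm)
  · have hempty : #{i | e i = t} = 0 :=
      card_eq_zero.2 (filter_eq_empty_iff.2 fun i _ hi ↦ ht (mem_image.2 ⟨i, mem_univ _, hi⟩))
    simp [hempty]

/-- An index occurring exactly once makes the expectation vanish. Otherwise there are at most `h`
distinct indices, each contributing a factor `p = (r * p) * r⁻¹`. -/
lemma abs_integral_prod_le [Finite E] [IsProbabilityMeasure μ] (hξ : IsSparseNoise ξ p μ)
    (hp : p ≤ 1) {r : ℝ} (hr : 0 < r) (hrp : 1 ≤ r * p) {h s : ℕ}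
    (hcard : Fintype.card ι ≤ 2 * h) (hs : s ≤ #(univ.image e)) :
    |∫ ω, ∏ i, ξ (e i) ω ∂μ| ≤ (r * p) ^ h * r⁻¹ ^ s := by
  cases nonempty_fintype E
  by_cases hone : ∃ t, #{i | e i = t} = 1
  · obtain ⟨t, ht⟩ := hone
    rw [hξ.integral_prod_eq, prod_eq_zero (mem_univ t) (by simp [ht, hξ.integral_eq_zero]),
      abs_zero]
    positivity
  · push Not at hone
    have hp0 : 0 ≤ p := (pos_of_mul_pos_right (zero_lt_one.trans_le hrp) hr.le).le
    have hle := (two_mul_card_image_le hone).trans hcard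
    calc _ ≤ p ^ #(univ.image e) := hξ.abs_integral_prod_le_pow_card_image hone
      _ ≤ p ^ s := pow_le_pow_of_le_one hp0 hp hs
      _ = (r * p) ^ s * r⁻¹ ^ s := by rw [← mul_pow]; field_simp
      _ ≤ _ := by gcongr; exact hs.trans (Nat.le_of_mul_le_mul_left hle two_pos)

end IsSparseNoise

end SparseNoise

/-! ### Moments of cluster energies -/

section WalkExpansion

variable {V K : Type*} {a : ℕ}

/-- The step preceding step `i` of a walk; `none` for the first step. -/
def prevStep (i : Fin a) : Option (Fin a) :=
  if (i : ℕ) = 0 then none else some ⟨i - 1, (Nat.sub_le _ _).trans_lt i.2⟩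

/-- The last vertex of the walk that starts at `u` and takes the steps `x`. -/
def walkEnd (u : V) (x : Fin a → V) : V := (Fin.cons u x : Fin (a + 1) → V) (Fin.last a)

lemma walkEnd_cons (u v : V) (x : Fin a → V) :
    walkEnd u (Fin.cons v x : Fin (a + 1) → V) = walkEnd v x := by
  rw [walkEnd, ← Fin.succ_last, Fin.cons_succ, walkEnd]

lemma elim_prevStep_succ (u v : V) (x : Fin a → V) (i : Fin a) :
    (prevStep i.succ).elim u (Fin.cons v x : Fin (a + 1) → V) = (prevStep i).elim v x := by
  cases a with
  | zero => exact i.elim0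
  | succ a =>
    cases i using Fin.cases with
    | zero => simp [prevStep]
    | succ i => exact congrArg x (Fin.ext rfl)

/-- The predecessor structure on `m` pairs of walks of length `a`. -/
def walkParent {m : ℕ} (t : Fin m × Fin 2 × Fin a) : Option (Fin m × Fin 2 × Fin a) :=
  (prevStep t.2.2).map fun i ↦ (t.1, t.2.1, i)

lemma lt_of_mem_walkParent {m : ℕ} {t s : Fin m × Fin 2 × Fin a} (h : s ∈ walkParent t) :
    (s.2.2 : ℕ) < t.2.2 := by
  simp only [walkParent, prevStep, Option.mem_def, Option.map_eq_some_iff] at h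
  obtain ⟨i, hi, rfl⟩ := h
  split_ifs at hi with h0
  rw [← Option.some.inj hi]
  exact Nat.sub_one_lt h0

section Weight

variable [Fintype K] [DecidableEq K] {m : ℕ} (c : V → K) (u : V) (x : Fin m × Fin 2 × Fin a → V)

/-- The weight of a family of pairs of walks from `u`: `1` if the two walks of each pair end in the
same cluster, and `0` otherwise. -/
def walkWeight : ℝ :=
  ∏ j, ∑ k, ∏ b, clusterMatrix c (walkEnd u fun i ↦ x (j, b, i)) k

lemma walkWeight_nonneg :
    0 ≤ walkWeight c u x := by
  refine prod_nonneg fun j _ ↦ sum_nonneg fun k _ ↦ prod_nonneg fun b _ ↦ ?_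
  rw [clusterMatrix, of_apply]
  positivity

lemma walkWeight_le_one :
    walkWeight c u x ≤ 1 := by
  refine prod_le_one (fun j _ ↦ sum_nonneg fun k _ ↦ prod_nonneg fun b _ ↦ ?_) fun j _ ↦ ?_
  · rw [clusterMatrix, of_apply]
    positivity
  · simp only [Fin.prod_univ_two, clusterMatrix, of_apply, mul_ite, mul_one, mul_zero, sum_ite_eq,
      mem_univ, if_true]
    split_ifs <;> norm_num

end Weight

variable [Fintype V] [DecidableEq V]

lemma pow_mul_apply_eq_sum {R : Type*} [CommSemiring R] (N : Matrix V V R) (B : Matrix V K R)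
    (a : ℕ) (u : V) (k : K) : (N ^ a * B) u k =
      ∑ x : Fin a → V, (∏ i, N ((prevStep i).elim u x) (x i)) * B (walkEnd u x) k := by
  induction a generalizing u with
  | zero => simp [walkEnd, Fin.last]
  | succ a ih =>
    rw [pow_succ', Matrix.mul_assoc, Matrix.mul_apply, ← (Fin.consEquiv fun _ ↦ V).sum_comp,
      Fintype.sum_prod_type]
    refine sum_congr rfl fun y _ ↦ ?_
    rw [ih, mul_sum]
    refine sum_congr rfl fun x _ ↦ ?_
    have hcons : (Fin.consEquiv fun _ ↦ V) (y, x) = (Fin.cons y x : Fin (a + 1) → V) := rfl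
    rw [hcons, walkEnd_cons, Fin.prod_univ_succ, ← mul_assoc]
    simp only [Fin.cons_succ, elim_prevStep_succ]
    rfl

lemma clusterEnergy_pow_eq_sum [Fintype K] [DecidableEq K] (c : V → K) (N : Matrix V V ℝ)
    (a m : ℕ) (u : V) : clusterEnergy c N a u ^ m = ∑ x : Fin m × Fin 2 × Fin a → V,
      walkWeight c u x * ∏ t, N ((walkParent t).elim u x) (x t) := by
  have henergy : clusterEnergy c N a u = ∑ z : Fin 2 → Fin a → V,
      (∑ k, ∏ b, clusterMatrix c (walkEnd u (z b)) k) *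
        ∏ b, ∏ i, N ((prevStep i).elim u (z b)) (z b i) := by
    simp only [clusterEnergy, pow_mul_apply_eq_sum, Fintype.sum_pow, prod_mul_distrib]
    rw [sum_comm]
    refine sum_congr rfl fun z _ ↦ ?_
    rw [sum_mul]
    exact sum_congr rfl fun k _ ↦ mul_comm _ _
  have helim (x : Fin m × Fin 2 × Fin a → V) (j : Fin m) (b : Fin 2) (i : Fin a) :
      (walkParent (j, b, i)).elim u x = (prevStep i).elim u fun i ↦ x (j, b, i) := by
    rw [walkParent, Option.elim_map]
    rfl
  rw [henergy, Fintype.sum_pow, ← ((Equiv.curry (Fin m) (Fin 2 × Fin a) V).trans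
    (Equiv.piCongrRight fun _ ↦ Equiv.curry (Fin 2) (Fin a) V)).sum_comp]
  refine sum_congr rfl fun x _ ↦ ?_
  simp only [prod_mul_distrib, Fintype.prod_prod_type, helim]
  rfl

end WalkExpansion

section EnergyMoment

variable {V K : Type*}

/-- The symmetric matrix with prescribed entries on unordered pairs. -/
def symMatrix (x : Sym2 V → ℝ) : Matrix V V ℝ := Matrix.of fun u v ↦ x s(u, v)

lemma isSymm_symMatrix (x : Sym2 V → ℝ) : (symMatrix x).IsSymm := by
  ext u v
  rw [transpose_apply, symMatrix, of_apply, of_apply, Sym2.eq_swap]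

variable [Fintype V] [DecidableEq V] [Fintype K] [DecidableEq K]
  {Ω : Type*} [MeasurableSpace Ω] {μ : Measure Ω} [IsProbabilityMeasure μ]
  {ξ : Sym2 V → Ω → ℝ} {p : ℝ}

lemma clusterEnergy_symMatrix_pow_eq_sum (c : V → K) (y : Sym2 V → ℝ) (a m : ℕ) (u : V) :
    clusterEnergy c (symMatrix y) a u ^ m = ∑ x : Fin m × Fin 2 × Fin a → V,
      walkWeight c u x * ∏ t, y (parentEdge walkParent u x t) :=
  clusterEnergy_pow_eq_sum c (symMatrix y) a m u

namespace IsSparseNoise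

lemma integrable_clusterEnergy_pow (hξ : IsSparseNoise ξ p μ) (c : V → K) (a m : ℕ) (u : V) :
    Integrable (fun ω ↦ clusterEnergy c (symMatrix fun e ↦ ξ e ω) a u ^ m) μ := by
  simp_rw [clusterEnergy_symMatrix_pow_eq_sum]
  exact integrable_finsetSum _ fun x _ ↦
    (hξ.integrable_prod univ (parentEdge walkParent u x)).const_mul _

lemma integral_clusterEnergy_pow_le (hξ : IsSparseNoise ξ p μ) (hp : p ≤ 1)
    (hVp : 1 ≤ Fintype.card V * p) (c : V → K) (a m : ℕ) (u : V) :
    ∫ ω, clusterEnergy c (symMatrix fun e ↦ ξ e ω) a u ^ m ∂μ ≤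
      (Fintype.card V * p) ^ (a * m) * (2 * (a * m) + 1).factorial := by
  have : Nonempty V := ⟨u⟩
  have hcard : Fintype.card (Fin m × Fin 2 × Fin a) = 2 * (a * m) := by
    simp only [Fintype.card_prod, Fintype.card_fin]
    ring
  have hterm (x : Fin m × Fin 2 × Fin a → V) :
      ∫ ω, walkWeight c u x * ∏ t, ξ (parentEdge walkParent u x t) ω ∂μ ≤
        (Fintype.card V * p) ^ (a * m) * (Fintype.card V : ℝ)⁻¹ ^ numVisited u x := by
    rw [integral_const_mul]
    calc _ ≤ walkWeight c u x * |∫ ω, ∏ t, ξ (parentEdge walkParent u x t) ω ∂μ| := by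
          gcongr
          · exact walkWeight_nonneg c u x
          · exact le_abs_self _
      _ ≤ |∫ ω, ∏ t, ξ (parentEdge walkParent u x t) ω ∂μ| :=
          mul_le_of_le_one_left (abs_nonneg _) (walkWeight_le_one c u x)
      _ ≤ _ := hξ.abs_integral_prod_le hp (by positivity) hVp hcard.le
          (numVisited_le_card_parentEdge fun t s hs ↦ lt_of_mem_walkParent hs)
  simp_rw [clusterEnergy_symMatrix_pow_eq_sum]
  rw [integral_finsetSum _ fun x _ ↦
    (hξ.integrable_prod univ (parentEdge walkParent u x)).const_mul _]
  calc _ ≤ ∑ x : Fin m × Fin 2 × Fin a → V,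
        (Fintype.card V * p) ^ (a * m) * (Fintype.card V : ℝ)⁻¹ ^ numVisited u x :=
        sum_le_sum fun x _ ↦ hterm x
    _ ≤ _ := by
        rw [← mul_sum, ← hcard]
        gcongr
        exact sum_inv_card_pow_numVisited_le u _

lemma measureReal_le_clusterEnergy_le (hξ : IsSparseNoise ξ p μ) (hp : p ≤ 1)
    (hVp : 1 ≤ Fintype.card V * p) (c : V → K) (a : ℕ) {m B : ℕ} (hm : m ≠ 0)
    (hB : 2 * (a * m) + 1 ≤ B) (u : V) :
    μ.real {ω | (8 * B * √(Fintype.card V * p)) ^ (2 * a) ≤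
      clusterEnergy c (symMatrix fun e ↦ ξ e ω) a u} ≤ (1 / 64) ^ (a * m) := by
  set d : ℝ := Fintype.card V * p
  have hd : 0 < d := zero_lt_one.trans_le hVp
  have hB0 : 0 < B := Nat.zero_lt_of_lt hB
  have henergy (ω : Ω) : 0 ≤ clusterEnergy c (symMatrix fun e ↦ ξ e ω) a u :=
    sum_nonneg fun _ _ ↦ sq_nonneg _
  have hpow : ((8 * B * √d) ^ (2 * a)) ^ m = 64 ^ (a * m) * (d ^ (a * m) * B ^ (2 * (a * m))) := by
    rw [← pow_mul, mul_assoc 2, pow_mul, mul_pow, mul_pow, Real.sq_sqrt hd.le, mul_pow, mul_pow,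
      ← pow_mul (B : ℝ)]
    ring
  have hfactorial : ((2 * (a * m) + 1).factorial : ℝ) ≤ B ^ (2 * (a * m)) := by
    have hdesc := Nat.factorial_mul_descFactorial (Nat.le_succ (2 * (a * m)))
    rw [Nat.succ_eq_add_one, Nat.add_sub_cancel_left, Nat.factorial_one, one_mul] at hdesc
    exact_mod_cast hdesc.symm.le.trans
      ((Nat.descFactorial_le_pow _ _).trans (Nat.pow_le_pow_left hB _))
  have hmarkov := mul_meas_ge_le_integral_of_nonneg
    (.of_forall fun ω ↦ pow_nonneg (henergy ω) m) (hξ.integrable_clusterEnergy_pow c a m u)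
    (((8 * B * √d) ^ (2 * a)) ^ m)
  simp only [pow_le_pow_iff_left₀ (pow_nonneg (by positivity : 0 ≤ 8 * B * √d) _) (henergy _) hm]
    at hmarkov
  refine le_of_mul_le_mul_left (hmarkov.trans ?_) (by positivity)
  calc _ ≤ d ^ (a * m) * B ^ (2 * (a * m)) :=
        (hξ.integral_clusterEnergy_pow_le hp hVp c a m u).trans (by gcongr)
    _ = _ := by rw [hpow, mul_right_comm, ← mul_pow]; norm_num

end IsSparseNoise

end EnergyMoment

/-! ### Energy-bounded noise -/

lemma norm_pow_of_isSelfAdjoint {R : Type*} [NormedRing R] [StarRing R] [CStarRing R] {x : R}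
    (hx : IsSelfAdjoint x) {a : ℕ} (ha : a ≠ 0) : ‖x ^ a‖ = ‖x‖ ^ a := by
  refine (norm_pow_le' x ha.pos).antisymm ?_
  rcases (norm_nonneg x).eq_or_lt with h0 | hpos
  · rw [← h0, zero_pow ha]
    exact norm_nonneg _
  obtain ⟨b, hb⟩ := Nat.exists_eq_add_of_lt (Nat.lt_two_pow_self (n := a))
  refine le_of_mul_le_mul_right ?_ (pow_pos hpos (b + 1))
  calc ‖x‖ ^ a * ‖x‖ ^ (b + 1) = ‖x ^ 2 ^ a‖ := by
        rw [← pow_add, ← add_assoc, ← hb, hx.norm_pow_two_pow]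
    _ ≤ ‖x ^ a‖ * ‖x ^ (b + 1)‖ := by rw [hb, add_assoc, pow_add]; exact norm_mul_le _ _
    _ ≤ _ := by gcongr; exact norm_pow_le' x b.succ_pos

section EnergyBounded

variable {V K : Type*} [Fintype V] [DecidableEq V]

lemma norm_toEuclideanCLM_sq_le (M : Matrix V V ℝ) :
    ‖toEuclideanCLM (𝕜 := ℝ) M‖ ^ 2 ≤ ∑ i, ∑ j, M i j ^ 2 := by
  rw [← Real.le_sqrt (norm_nonneg _) (by positivity)]
  refine ContinuousLinearMap.opNorm_le_bound _ (Real.sqrt_nonneg _) fun x ↦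
    le_of_sq_le_sq ?_ (by positivity)
  rw [mul_pow, Real.sq_sqrt (by positivity), EuclideanSpace.real_norm_sq_eq,
    EuclideanSpace.real_norm_sq_eq, sum_mul]
  exact sum_le_sum fun i _ ↦ sum_mul_sq_le_sq_mul_sq univ (M i) x

lemma norm_toEuclideanCLM_le_of_clusterEnergy_id_le {N : Matrix V V ℝ} (hN : N.IsSymm) {A : ℕ}
    {T : ℝ} (hA : A ≠ 0) (hVA : (Fintype.card V : ℝ) ≤ 4 ^ A) (hT : 0 ≤ T)
    (h : ∀ u, clusterEnergy id N A u ≤ T ^ (2 * A)) : ‖toEuclideanCLM (𝕜 := ℝ) N‖ ≤ 2 * T := by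
  have hself : IsSelfAdjoint (toEuclideanCLM (𝕜 := ℝ) N) :=
    (isHermitian_iff_isSymm.2 hN).isSelfAdjoint.map _
  refine le_of_pow_le_pow_left₀ (mul_ne_zero hA two_ne_zero) (by positivity) ?_
  calc ‖toEuclideanCLM (𝕜 := ℝ) N‖ ^ (A * 2) = ‖toEuclideanCLM (𝕜 := ℝ) (N ^ A)‖ ^ 2 := by
        rw [map_pow, norm_pow_of_isSelfAdjoint hself hA, pow_mul]
    _ ≤ ∑ u, ∑ s, (N ^ A) u s ^ 2 := norm_toEuclideanCLM_sq_le _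
    _ = ∑ u, clusterEnergy id N A u := by
        have hone : clusterMatrix (id : V → V) = 1 := by ext; simp [clusterMatrix, Matrix.one_apply]
        simp only [clusterEnergy, hone, Matrix.mul_one]
    _ ≤ Fintype.card V * T ^ (2 * A) := by
        simpa using sum_le_sum fun u (_ : u ∈ univ) ↦ h u
    _ ≤ 4 ^ A * T ^ (2 * A) := by gcongr
    _ = (2 * T) ^ (A * 2) := by rw [mul_comm A, mul_pow, pow_mul 2 2]; norm_num

variable [Fintype K] [DecidableEq K]

/-- The good event for the noise matrix: `A` steps of the walk keep the energy of every row below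
`T ^ (2 * A)`, and at most `A` steps keep the energy of its cluster sums below the same rate. -/
def EnergyBounded (c : V → K) (T : ℝ) (A : ℕ) (N : Matrix V V ℝ) : Prop :=
  ∀ u, clusterEnergy id N A u ≤ T ^ (2 * A) ∧ ∀ a ≤ A, clusterEnergy c N a u ≤ T ^ (2 * a)

lemma continuous_clusterEnergy_symMatrix (c : V → K) (a : ℕ) (u : V) :
    Continuous fun y : Sym2 V → ℝ ↦ clusterEnergy c (symMatrix y) a u := by
  unfold clusterEnergy symMatrix
  fun_prop

lemma measurableSet_energyBounded_symMatrix (c : V → K) (T : ℝ) (A : ℕ) :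
    MeasurableSet {y : Sym2 V → ℝ | EnergyBounded c T A (symMatrix y)} := by
  simp only [EnergyBounded, Set.ofPred_forall, Set.ofPred_and]
  exact (isClosed_iInter fun u ↦
    (isClosed_le (continuous_clusterEnergy_symMatrix _ _ _) continuous_const).inter <|
      isClosed_iInter fun a ↦ isClosed_iInter fun _ ↦
        isClosed_le (continuous_clusterEnergy_symMatrix _ _ _) continuous_const).measurableSet

variable {n k : ℕ} {p q T : ℝ} {c : Fin n → Fin k} {N : Matrix (Fin n) (Fin n) ℝ} {A : ℕ}

lemma EnergyBounded.svdClearCut (hN : EnergyBounded c T A N) (hsymm : N.IsSymm) (hq : 0 ≤ q)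
    (hpq : q < p) (hn : 0 < n) (hk : 0 < k) (hc : ∀ i, (n : ℝ) / (2 * k) ≤ clusterSize c i)
    (hT : 0 ≤ T) (hTn : 200 * T ≤ (p - q) * (n / k)) (hA : A ≠ 0) (hnA : (n : ℝ) ≤ 4 ^ A) :
    SvdClearCut p q c N := by
  refine svdClearCut_of_clusterEnergy_le hq hpq hn hk hc hsymm (τ := 2 * T) ?_ (by linarith) hnA
    fun a ha u ↦ ((hN u).2 a ha).trans (by gcongr; linarith)
  exact norm_toEuclideanCLM_le_of_clusterEnergy_id_le hsymm hA (by simpa using hnA) hT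
    fun u ↦ (hN u).1

variable {Ω : Type*} [MeasurableSpace Ω] {μ : Measure Ω} [IsProbabilityMeasure μ]

namespace IsSparseNoise

variable {ξ : Sym2 V → Ω → ℝ}

lemma measureReal_le_clusterEnergy_le_of_mem_Icc (hξ : IsSparseNoise ξ p μ) (hp : p ≤ 1)
    (hVp : 1 ≤ Fintype.card V * p) (c : V → K) (u : V) {a : ℕ} (ha : a ∈ Icc 1 A) :
    μ.real {ω | (8 * (2 * A ^ 2 + 1 : ℕ) * √(Fintype.card V * p)) ^ (2 * a) ≤
      clusterEnergy c (symMatrix fun e ↦ ξ e ω) a u} ≤ (1 / 64) ^ A := by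
  obtain ⟨ha_pos, haA⟩ := mem_Icc.1 ha
  refine (hξ.measureReal_le_clusterEnergy_le hp hVp c a (m := A) (by lia)
    (by rw [sq]; gcongr) u).trans ?_
  exact pow_le_pow_of_le_one (by norm_num) (by norm_num) (Nat.le_mul_of_pos_left A ha_pos)

lemma measureReal_not_energyBounded_le (hξ : IsSparseNoise ξ p μ) (hp : p ≤ 1)
    (hVp : 1 ≤ Fintype.card V * p) (c : V → K) (hA : A ≠ 0) :
    μ.real {ω | ¬ EnergyBounded c (8 * (2 * A ^ 2 + 1 : ℕ) * √(Fintype.card V * p)) A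
      (symMatrix fun e ↦ ξ e ω)} ≤ Fintype.card V * (A + 1) * (1 / 64) ^ A := by
  set T : ℝ := 8 * (2 * A ^ 2 + 1 : ℕ) * √(Fintype.card V * p)
  have hsub : {ω | ¬ EnergyBounded c T A (symMatrix fun e ↦ ξ e ω)} ⊆ ⋃ u ∈ univ,
      ({ω | T ^ (2 * A) ≤ clusterEnergy id (symMatrix fun e ↦ ξ e ω) A u} ∪ ⋃ a ∈ Icc 1 A,
        {ω | T ^ (2 * a) ≤ clusterEnergy c (symMatrix fun e ↦ ξ e ω) a u}) := by
    intro ω hω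
    contrapose! hω
    simp only [Set.mem_iUnion, Set.mem_union, Set.mem_ofPred_eq, not_exists, not_or, not_le,
      not_not, mem_univ, true_imp_iff, mem_Icc] at hω ⊢
    refine fun u ↦ ⟨(hω u).1.le, fun a ha ↦ ?_⟩
    rcases a.eq_zero_or_pos with rfl | ha_pos
    · simp [clusterEnergy_zero]
    · exact ((hω u).2 a ⟨ha_pos, ha⟩).le
  calc _ ≤ ∑ u : V, ((1 / 64) ^ A + ∑ _a ∈ Icc 1 A, (1 / 64 : ℝ) ^ A) := by
        refine (measureReal_mono hsub (measure_ne_top _ _)).trans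
          ((measureReal_biUnion_finset_le _ _).trans ?_)
        refine sum_le_sum fun u _ ↦ (measureReal_union_le _ _).trans (add_le_add ?_ ?_)
        · exact hξ.measureReal_le_clusterEnergy_le_of_mem_Icc hp hVp id u
            (mem_Icc.2 ⟨hA.pos, le_rfl⟩)
        · exact (measureReal_biUnion_finset_le _ _).trans (sum_le_sum fun a ha ↦
            hξ.measureReal_le_clusterEnergy_le_of_mem_Icc hp hVp c u ha)
    _ = _ := by
        rw [sum_const, sum_const, Nat.card_Icc, Nat.add_sub_cancel, card_univ, nsmul_eq_mul,
          nsmul_eq_mul]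
        ring

end IsSparseNoise

end EnergyBounded

/-! ### The noise of the stochastic block model -/

section EdgeNoise

/-- A centred Bernoulli variable of parameter `g`, as a function of a uniform variable `x` on
`[0, 1)`. -/
noncomputable def centeredBernoulli (g x : ℝ) : ℝ := if x < g then 1 - g else -g

variable {g : ℝ}

lemma measurable_centeredBernoulli (g : ℝ) : Measurable (centeredBernoulli g) :=
  Measurable.ite measurableSet_Iio measurable_const measurable_const

lemma abs_centeredBernoulli_le_one (hg : g ∈ Set.Icc 0 1) (x : ℝ) :
    |centeredBernoulli g x| ≤ 1 := by
  unfold centeredBernoulli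
  split_ifs <;> exact abs_le.2 (by constructor <;> linarith [hg.1, hg.2])

lemma setIntegral_Ico_comp_centeredBernoulli (hg : g ∈ Set.Icc 0 1) (f : ℝ → ℝ) :
    ∫ x in Set.Ico 0 1, f (centeredBernoulli g x) = g * f (1 - g) + (1 - g) * f (-g) := by
  have hlo : Set.EqOn (fun x ↦ f (centeredBernoulli g x)) (fun _ ↦ f (1 - g)) (Set.Ico 0 g) :=
    fun x hx ↦ by simp [centeredBernoulli, hx.2]
  have hhi : Set.EqOn (fun x ↦ f (centeredBernoulli g x)) (fun _ ↦ f (-g)) (Set.Ico g 1) :=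
    fun x hx ↦ by simp [centeredBernoulli, not_lt.2 hx.1]
  rw [← Set.Ico_union_Ico_eq_Ico hg.1 hg.2, setIntegral_union
      (Set.Ico_disjoint_Ico_same) measurableSet_Ico
      ((integrableOn_congr_fun hlo measurableSet_Ico).2 (by simp))
      ((integrableOn_congr_fun hhi measurableSet_Ico).2 (by simp)),
    setIntegral_congr_fun measurableSet_Ico hlo, setIntegral_congr_fun measurableSet_Ico hhi]
  simp [hg.1, hg.2]

variable {n k : ℕ} {p q : ℝ}

/-- The mean `G_{uv}` of the edge `s(u, v)`. -/
def edgeMean (p q : ℝ) (c : Fin n → Fin k) : Sym2 (Fin n) → ℝ :=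
  Sym2.lift ⟨meanMatrix n k p q c, fun _ _ ↦ if_congr eq_comm rfl rfl⟩

lemma edgeMean_mem_Icc (hq : 0 ≤ q) (hpq : q ≤ p) (c : Fin n → Fin k) (e : Sym2 (Fin n)) :
    edgeMean p q c e ∈ Set.Icc 0 p := by
  induction e with | _ u v
  simp only [edgeMean, meanMatrix, Sym2.lift_mk, of_apply]
  split_ifs <;> constructor <;> linarith

/-- `EIdx n` as the set of edges: an unordered pair is encoded by its two ends in increasing
order. -/
def edgeEquiv : Sym2 (Fin n) ≃ EIdx n := Sym2.sortEquiv

lemma symPair_eq_edgeEquiv (u v : Fin n) : symPair u v = edgeEquiv s(u, v) := by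
  by_cases h : u ≤ v
  · exact (dif_pos h).trans
      (Subtype.ext (Prod.ext (inf_eq_left.2 h).symm (sup_eq_right.2 h).symm))
  · have h' := le_of_not_ge h
    exact (dif_neg h).trans
      (Subtype.ext (Prod.ext (inf_eq_right.2 h').symm (sup_eq_left.2 h').symm))

/-- The entry of `noiseOf p q c x` at the edge `e`. -/
noncomputable def edgeNoise (p q : ℝ) (c : Fin n → Fin k) (x : EIdx n → ℝ) (e : Sym2 (Fin n)) :
    ℝ :=
  centeredBernoulli (edgeMean p q c e) (x (edgeEquiv e))

lemma noiseOf_eq_symMatrix (c : Fin n → Fin k) (x : EIdx n → ℝ) :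
    noiseOf p q c x = symMatrix (edgeNoise p q c x) := by
  ext u v
  rw [noiseOf, of_apply, symPair_eq_edgeEquiv]
  rfl

lemma measurable_edgeNoise (c : Fin n → Fin k) : Measurable (edgeNoise p q c) :=
  measurable_pi_lambda _ fun _ ↦
    (measurable_centeredBernoulli _).comp (measurable_pi_apply _)

lemma measurableSet_energyBounded_noiseOf (c : Fin n → Fin k) (T : ℝ) (A : ℕ) :
    MeasurableSet {x : EIdx n → ℝ | EnergyBounded c T A (noiseOf p q c x)} := by
  simp only [noiseOf_eq_symMatrix]
  exact measurable_edgeNoise c (measurableSet_energyBounded_symMatrix c T A)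

variable {Ω : Type*} [MeasurableSpace Ω] {μ : Measure Ω}

lemma integral_comp_edgeNoise {c : Fin n → Fin k} {e : Sym2 (Fin n)}
    (he : edgeMean p q c e ∈ Set.Icc 0 1) {U : Ω → EIdx n → ℝ}
    (hU : Measurable fun ω ↦ U ω (edgeEquiv e))
    (hunif : μ.map (fun ω ↦ U ω (edgeEquiv e)) = volume.restrict (Set.Ico 0 1)) {f : ℝ → ℝ}
    (hf : Measurable f) :
    ∫ ω, f (edgeNoise p q c (U ω) e) ∂μ = edgeMean p q c e * f (1 - edgeMean p q c e) +
      (1 - edgeMean p q c e) * f (-edgeMean p q c e) := by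
  have hf_comp := (hf.comp (measurable_centeredBernoulli (edgeMean p q c e))).aestronglyMeasurable
    (μ := μ.map fun ω ↦ U ω (edgeEquiv e))
  rw [← setIntegral_Ico_comp_centeredBernoulli he, ← hunif]
  exact (integral_map hU.aemeasurable hf_comp).symm

lemma isSparseNoise_edgeNoise (hq : 0 ≤ q) (hpq : q ≤ p) (hp : p ≤ 1) {U : Ω → EIdx n → ℝ}
    (hU : ∀ e, Measurable fun ω ↦ U ω e) (hindep : iIndepFun (fun e ω ↦ U ω e) μ)
    (hunif : ∀ e, μ.map (fun ω ↦ U ω e) = volume.restrict (Set.Ico 0 1)) (c : Fin n → Fin k) :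
    IsSparseNoise (fun e ω ↦ edgeNoise p q c (U ω) e) p μ := by
  have hg (e) : edgeMean p q c e ∈ Set.Icc 0 1 :=
    Set.Icc_subset_Icc_right hp (edgeMean_mem_Icc hq hpq c e)
  have hmeas (e) := measurable_centeredBernoulli (edgeMean p q c e)
  refine ⟨fun e ↦ (hmeas e).comp (hU _), (hindep.precomp edgeEquiv.injective).comp _ hmeas,
    fun e ω ↦ abs_centeredBernoulli_le_one (hg e) _, fun e ↦ ?_, fun e ↦ ?_⟩
  · refine (integral_comp_edgeNoise (hg e) (hU _) (hunif _) measurable_id).trans ?_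
    simp only [id]
    ring
  · refine (integral_comp_edgeNoise (hg e) (hU _) (hunif _)
      (measurable_id.pow_const 2)).trans_le ?_
    simp only [id]
    nlinarith [(edgeMean_mem_Icc hq hpq c e).2, (hg e).1]

end EdgeNoise

section Independence

variable {n k : ℕ} {Ω α β : Type*} [MeasurableSpace Ω] {μ : Measure Ω}

lemma measureReal_mem_le_of_indepFun [IsProbabilityMeasure μ] [MeasurableSpace α] [Finite α]
    [MeasurableSingletonClass α] [MeasurableSpace β] {X : Ω → α} {Y : Ω → β} {s : α → Set β}
    {δ : ℝ} (hX : Measurable X)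
    (hXY : X ⟂ᵢ[μ] Y) (hs : ∀ x, MeasurableSet (s x)) (h : ∀ x, μ.real (Y ⁻¹' s x) ≤ δ) :
    μ.real {ω | Y ω ∈ s (X ω)} ≤ δ := by
  cases nonempty_fintype α
  have hsub : {ω | Y ω ∈ s (X ω)} ⊆ ⋃ x ∈ univ, X ⁻¹' {x} ∩ Y ⁻¹' s x := fun ω hω ↦ by
    simpa using hω
  calc _ ≤ ∑ x, μ.real (X ⁻¹' {x} ∩ Y ⁻¹' s x) :=
        (measureReal_mono hsub (measure_ne_top _ _)).trans (measureReal_biUnion_finset_le _ _)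
    _ ≤ ∑ x, μ.real (X ⁻¹' {x}) * δ := by
        refine sum_le_sum fun x _ ↦ ?_
        rw [measureReal_def, hXY.measure_inter_preimage_eq_mul _ _ (.singleton x) (hs x),
          ENNReal.toReal_mul]
        exact mul_le_mul_of_nonneg_left (h x) measureReal_nonneg
    _ = δ := by
        rw [← sum_mul, sum_measureReal_preimage_singleton _ fun x _ ↦ hX (.singleton x)]
        simp

variable {cl : Ω → Fin n → Fin k} {U : Ω → EIdx n → ℝ}

lemma iIndepFun_cl_of_mixFam (h : iIndepFun (m := mixMS n k) (mixFam cl U) μ) :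
    iIndepFun (fun v ω ↦ cl ω v) μ :=
  iIndepFun.precomp (m := mixMS n k) (f := mixFam cl U) Sum.inl_injective h

lemma iIndepFun_edges_of_mixFam (h : iIndepFun (m := mixMS n k) (mixFam cl U) μ) :
    iIndepFun (fun e ω ↦ U ω e) μ :=
  iIndepFun.precomp (m := mixMS n k) (f := mixFam cl U) Sum.inr_injective h

lemma indepFun_of_mixFam (hcl : ∀ v, Measurable fun ω ↦ cl ω v)
    (hU : ∀ e, Measurable fun ω ↦ U ω e) (h : iIndepFun (m := mixMS n k) (mixFam cl U) μ) :
    cl ⟂ᵢ[μ] U := by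
  let _ := mixMS n k
  have : Fintype (EIdx n) := inferInstanceAs (Fintype {e : Fin n × Fin n // e.1 ≤ e.2})
  have hdisj : Disjoint (univ.map .inl : Finset (Fin n ⊕ EIdx n)) (univ.map .inr) := by
    simp [Finset.disjoint_left]
  have hfinset := h.indepFun_finset _ _ hdisj (Sum.rec hcl hU)
  exact hfinset.comp
    (φ := fun x v ↦ x ⟨.inl v, by simp⟩) (ψ := fun x e ↦ x ⟨.inr e, by simp⟩)
    (measurable_pi_lambda _ fun _ ↦ measurable_pi_apply _)
    (measurable_pi_lambda _ fun _ ↦ measurable_pi_apply _)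

end Independence

/-! ### Cluster sizes -/

section Chernoff

variable {Ω ι : Type*} [MeasurableSpace Ω] {μ : Measure Ω} [IsProbabilityMeasure μ]

lemma exp_neg_le_one_sub_mul {x : ℝ} (hx : x ∈ Set.Icc 0 1) :
    Real.exp (-x) ≤ 1 - (1 - Real.exp (-1)) * x := by
  have h := convexOn_exp.2 (Set.mem_univ 0) (Set.mem_univ (-1)) (sub_nonneg.2 hx.2) hx.1 (by ring)
  simp only [smul_eq_mul, mul_zero, mul_neg, mul_one, zero_add, Real.exp_zero] at h
  linarith

lemma mgf_neg_one_le_exp {X : Ω → ℝ} (hX : Measurable X) (hX01 : ∀ ω, X ω ∈ Set.Icc 0 1) :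
    mgf X μ (-1) ≤ Real.exp (-(5 / 8) * μ[X]) := by
  have hX_int : Integrable X μ := .of_mem_Icc 0 1 hX.aemeasurable (.of_forall hX01)
  have hmean : 0 ≤ μ[X] := integral_nonneg fun ω ↦ (hX01 ω).1
  have he : Real.exp (-1) ≤ 3 / 8 := by linarith [Real.exp_neg_one_lt_d9]
  calc mgf X μ (-1) ≤ ∫ ω, (1 - (1 - Real.exp (-1)) * X ω) ∂μ := by
        refine integral_mono_of_nonneg (.of_forall fun ω ↦ (Real.exp_pos _).le)
          ((integrable_const _).sub (hX_int.const_mul _)) (.of_forall fun ω ↦ ?_)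
        simpa using exp_neg_le_one_sub_mul (hX01 ω)
    _ = 1 - (1 - Real.exp (-1)) * μ[X] := by
        rw [integral_sub (integrable_const _) (hX_int.const_mul _), integral_const_mul]
        simp
    _ ≤ -(5 / 8) * μ[X] + 1 := by nlinarith
    _ ≤ Real.exp (-(5 / 8) * μ[X]) := Real.add_one_le_exp _

lemma measureReal_sum_le_half_le_exp [Fintype ι] {X : ι → Ω → ℝ} (hX : ∀ i, Measurable (X i))
    (hX01 : ∀ i ω, X i ω ∈ Set.Icc 0 1) (hindep : iIndepFun X μ) :
    μ.real {ω | ∑ i, X i ω ≤ (∑ i, μ[X i]) / 2} ≤ Real.exp (-(∑ i, μ[X i]) / 8) := by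
  set M := ∑ i, μ[X i]
  have hexp_int : Integrable (fun ω ↦ Real.exp (-1 * (∑ i, X i) ω)) μ := by
    refine .of_mem_Icc 0 1 (by fun_prop) (.of_forall fun ω ↦ ⟨(Real.exp_pos _).le, ?_⟩)
    simpa using sum_nonneg fun i _ ↦ (hX01 i ω).1
  have htail := measure_le_le_exp_mul_mgf (M / 2) (by norm_num) hexp_int
  simp only [Finset.sum_apply] at htail
  calc _ ≤ Real.exp (M / 2) * mgf (∑ i, X i) μ (-1) := by simpa using htail
    _ ≤ Real.exp (M / 2) * Real.exp (-(5 / 8) * M) := by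
        gcongr
        rw [hindep.mgf_sum hX, mul_sum, Real.exp_sum]
        exact prod_le_prod (fun _ _ ↦ mgf_nonneg) fun i _ ↦ mgf_neg_one_le_exp (hX i) (hX01 i)
    _ = Real.exp (-M / 8) := by rw [← Real.exp_add]; ring_nf

variable {n k : ℕ} {cl : Ω → Fin n → Fin k}

lemma measureReal_clusterSize_le_le_exp (hcl : ∀ v, Measurable fun ω ↦ cl ω v)
    (hindep : iIndepFun (fun v ω ↦ cl ω v) μ) {i : Fin k}
    (hunif : ∀ v, μ {ω | cl ω v = i} = (k : ENNReal)⁻¹) :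
    μ.real {ω | (clusterSize (cl ω) i : ℝ) ≤ n / (2 * k)} ≤ Real.exp (-(n / k / 8)) := by
  let f (j : Fin k) : ℝ := if j = i then 1 else 0
  have hmean (v) : ∫ ω, f (cl ω v) ∂μ = (k : ℝ)⁻¹ := by
    have hf : (fun ω ↦ f (cl ω v)) = Set.indicator ((fun ω ↦ cl ω v) ⁻¹' {i}) 1 := by
      ext ω
      by_cases h : cl ω v = i <;> simp [f, h]
    have hprob : μ ((fun ω ↦ cl ω v) ⁻¹' {i}) = (k : ENNReal)⁻¹ := hunif v
    simp [hf, integral_indicator_one (hcl v (.singleton i)), measureReal_def, hprob]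
  have hsum (ω) : ∑ v, f (cl ω v) = clusterSize (cl ω) i := by
    simp [f, clusterSize]
  have htail := measureReal_sum_le_half_le_exp (X := fun v ω ↦ f (cl ω v)) (μ := μ)
    (fun v ↦ (measurable_of_finite f).comp (hcl v))
    (fun v ω ↦ by dsimp only [f]; split_ifs <;> simp)
    (hindep.comp _ fun _ ↦ measurable_of_finite f)
  simp only [hmean, hsum, sum_const, card_univ, Fintype.card_fin, nsmul_eq_mul] at htail
  have hhalf : (n : ℝ) * (k : ℝ)⁻¹ / 2 = n / (2 * k) := by ring
  have heighth : -((n : ℝ) * (k : ℝ)⁻¹) / 8 = -(n / k / 8) := by ring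
  rwa [hhalf, heighth] at htail

end Chernoff

/-! ### The parameters -/

section Parameters

variable {n k p q D L : ℝ} {m : ℕ}

lemma sq_mul_le_of_sq_mul_div_sq_le {d x y : ℝ} (hd : 0 < d) (hx : 0 ≤ x) (hxy : x ≤ y)
    (hk : 0 ≤ k) (h : D ^ 2 * k * (y / d) ^ 2 ≤ n) : D ^ 2 * k * x ^ 2 ≤ n * d ^ 2 := by
  rw [div_pow, ← mul_div_assoc, div_le_iff₀ (by positivity)] at h
  exact le_trans (by gcongr) h

lemma sq_mul_log_le_div_of_sq_mul_le (hq : 0 ≤ q) (hpq : q < p) (hp : p ≤ 1) (hn : 0 ≤ n)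
    (hk : 0 < k) (hL : 0 ≤ L) (h : D ^ 2 * k * ((√(k * p) * L ^ m + √L) / (p - q)) ^ 2 ≤ n) :
    D ^ 2 * L ≤ n / k := by
  have hL_le : √L ≤ √(k * p) * L ^ m + √L := le_add_of_nonneg_left (by positivity)
  have hLn := sq_mul_le_of_sq_mul_div_sq_le (sub_pos.2 hpq) (Real.sqrt_nonneg L) hL_le hk.le h
  rw [Real.sq_sqrt hL] at hLn
  rw [le_div_iff₀ hk]
  calc D ^ 2 * L * k = D ^ 2 * k * L := by ring
    _ ≤ n * (p - q) ^ 2 := hLn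
    _ ≤ n := mul_le_of_le_one_right hn (pow_le_one₀ (by linarith) (by linarith))

lemma sq_mul_pow_le_of_sq_mul_le (hp : 0 ≤ p) (hpq : q < p) (hk : 0 ≤ k) (hL : 1 ≤ L)
    (hm : 2 ≤ m) (h : D ^ 2 * k * ((√(k * p) * L ^ m + √L) / (p - q)) ^ 2 ≤ n) :
    (D * k * L ^ 2) ^ 2 * p ≤ n * (p - q) ^ 2 := by
  have hx_le : √(k * p) * L ^ 2 ≤ √(k * p) * L ^ m + √L :=
    le_add_of_le_of_nonneg (by gcongr) (Real.sqrt_nonneg L)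
  have hxn := sq_mul_le_of_sq_mul_div_sq_le (sub_pos.2 hpq) (by positivity) hx_le hk h
  rw [mul_pow (√_), Real.sq_sqrt (by positivity)] at hxn
  exact le_trans (by ring_nf; rfl) hxn

lemma one_le_mul_of_sq_mul_le (hq : 0 ≤ q) (hpq : q < p) (hn : 0 ≤ n) (hk : 1 ≤ k)
    (hD : 1 ≤ D) (hL : 1 ≤ L) (hm : 2 ≤ m)
    (h : D ^ 2 * k * ((√(k * p) * L ^ m + √L) / (p - q)) ^ 2 ≤ n) : 1 ≤ n * p := by
  have hp : 0 < p := hq.trans_lt hpq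
  have hDkL : 1 ≤ D * k * L ^ 2 :=
    one_le_mul_of_one_le_of_one_le (one_le_mul_of_one_le_of_one_le hD hk) (one_le_pow₀ hL)
  refine le_of_mul_le_mul_right ?_ hp
  calc 1 * p ≤ (D * k * L ^ 2) ^ 2 * p := by gcongr; exact one_le_pow₀ hDkL
    _ ≤ n * (p - q) ^ 2 := sq_mul_pow_le_of_sq_mul_le hp.le hpq (by linarith) hL hm h
    _ ≤ n * p ^ 2 := by gcongr; linarith
    _ = n * p * p := by ring

lemma mul_sqrt_le_of_sq_mul_le (hp : 0 ≤ p) (hpq : q < p) (hn : 0 ≤ n) (hk : 0 < k)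
    (hL : 1 ≤ L) (hm : 2 ≤ m)
    (h : D ^ 2 * k * ((√(k * p) * L ^ m + √L) / (p - q)) ^ 2 ≤ n) :
    D * L ^ 2 * √(n * p) ≤ (p - q) * (n / k) := by
  refine le_of_sq_le_sq ?_ (mul_nonneg (by linarith) (by positivity))
  rw [mul_pow _ √_, Real.sq_sqrt (by positivity), mul_pow (p - q), div_pow, ← mul_div_assoc,
    le_div_iff₀ (by positivity)]
  calc (D * L ^ 2) ^ 2 * (n * p) * k ^ 2 = n * ((D * k * L ^ 2) ^ 2 * p) := by ring
    _ ≤ n * (n * (p - q) ^ 2) := by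
        exact mul_le_mul_of_nonneg_left (sq_mul_pow_le_of_sq_mul_le hp hpq hk.le hL hm h) hn
    _ = (p - q) ^ 2 * n ^ 2 := by ring

end Parameters

/-! ### The failure probability -/

section Probability

variable {n k A : ℕ} {p q : ℝ}

lemma natCast_le_four_pow_of_log_le (hn : 0 < n) (hA : Real.log n ≤ A) : (n : ℝ) ≤ 4 ^ A := by
  calc (n : ℝ) ≤ Real.exp A := (Real.log_le_iff_le_exp (by positivity)).1 hA
    _ = Real.exp 1 ^ A := by rw [← Real.exp_nat_mul, mul_one]
    _ ≤ 4 ^ A := by gcongr; linarith [Real.exp_one_lt_d9]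

lemma mul_inv_pow_le_two_div (hn : 0 < n) (hnA : (n : ℝ) ≤ 4 ^ A) (hA : (A : ℝ) ≤ n) :
    (n : ℝ) * (A + 1) * (1 / 64) ^ A ≤ 2 / n := by
  have hn_one : (1 : ℝ) ≤ n := by exact_mod_cast hn
  have hpow : (n : ℝ) ^ 3 ≤ 64 ^ A := by
    calc (n : ℝ) ^ 3 ≤ (4 ^ A) ^ 3 := by gcongr
      _ = 64 ^ A := by rw [pow_right_comm]; norm_num
  calc (n : ℝ) * (A + 1) * (1 / 64) ^ A = n * (A + 1) / 64 ^ A := by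
        rw [_root_.one_div_pow, mul_one_div]
    _ ≤ n * (n + n) / n ^ 3 := by gcongr
    _ = 2 / n := by field_simp; ring

lemma mul_exp_neg_div_le_inv (hk : 0 < k) (hL : 1 ≤ Real.log n)
    (hnk : 16 * Real.log n ≤ n / k) : (k : ℝ) * Real.exp (-(n / k / 8)) ≤ 1 / n := by
  have hk' : (0 : ℝ) < k := by exact_mod_cast hk
  have hkn : (k : ℝ) ≤ n := (one_le_div₀ hk').1 (by linarith)
  have hn : (0 : ℝ) < n := hk'.trans_le hkn
  calc (k : ℝ) * Real.exp (-(n / k / 8)) ≤ n * Real.exp (-Real.log n + -Real.log n) := by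
        gcongr
        linarith
    _ = 1 / n := by
        rw [Real.exp_add, Real.exp_neg, Real.exp_log hn]
        field_simp

variable {Ω : Type*} [MeasurableSpace Ω] {μ : Measure Ω} [IsProbabilityMeasure μ]

lemma ofReal_one_sub_le_measure {s : Set Ω} {δ : ℝ} (hs : μ.real sᶜ ≤ δ) :
    ENNReal.ofReal (1 - δ) ≤ μ s := by
  refine ENNReal.ofReal_le_of_le_toReal (sub_le_iff_le_add.2 ?_)
  calc 1 = μ.real (s ∪ sᶜ) := by simp
    _ ≤ μ.real s + δ := (measureReal_union_le _ _).trans (by gcongr)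

variable {cl : Ω → Fin n → Fin k} {U : Ω → EIdx n → ℝ}

lemma measureReal_exists_clusterSize_le_le (hk : 0 < k) (hcl : ∀ v, Measurable fun ω ↦ cl ω v)
    (hindep : iIndepFun (fun v ω ↦ cl ω v) μ)
    (hunif : ∀ v i, μ {ω | cl ω v = i} = (k : ENNReal)⁻¹) (hL : 1 ≤ Real.log n)
    (hnk : 16 * Real.log n ≤ n / k) :
    μ.real (⋃ i ∈ univ, {ω | (clusterSize (cl ω) i : ℝ) ≤ n / (2 * k)}) ≤ 1 / n :=
  calc _ ≤ ∑ _i : Fin k, Real.exp (-(n / k / 8)) :=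
        (measureReal_biUnion_finset_le _ _).trans <| sum_le_sum fun i _ ↦
          measureReal_clusterSize_le_le_exp hcl hindep (hunif · i)
    _ = k * Real.exp (-(n / k / 8)) := by simp
    _ ≤ 1 / n := mul_exp_neg_div_le_inv hk hL hnk

lemma measureReal_not_energyBounded_noiseOf_le (hq : 0 ≤ q) (hpq : q ≤ p) (hp : p ≤ 1)
    (hcl : ∀ v, Measurable fun ω ↦ cl ω v) (hU : ∀ e, Measurable fun ω ↦ U ω e)
    (hindep : iIndepFun (m := mixMS n k) (mixFam cl U) μ)
    (hunif : ∀ e, μ.map (fun ω ↦ U ω e) = volume.restrict (Set.Ico 0 1)) (hnp : 1 ≤ n * p)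
    (hA : A ≠ 0) :
    μ.real {ω | ¬ EnergyBounded (cl ω) (8 * (2 * A ^ 2 + 1 : ℕ) * √(n * p)) A
      (noiseOf p q (cl ω) (U ω))} ≤ n * (A + 1) * (1 / 64) ^ A := by
  refine measureReal_mem_le_of_indepFun (X := cl) (Y := U)
    (s := fun c ↦ {x | ¬ EnergyBounded c _ A (noiseOf p q c x)}) (measurable_pi_lambda _ hcl)
    (indepFun_of_mixFam hcl hU hindep) (fun c ↦ (measurableSet_energyBounded_noiseOf c _ A).compl)
    fun c ↦ ?_
  have hξ := isSparseNoise_edgeNoise hq hpq hp hU (iIndepFun_edges_of_mixFam hindep) hunif c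
  simpa [noiseOf_eq_symMatrix] using
    hξ.measureReal_not_energyBounded_le hp (by simpa using hnp) c hA

lemma measureReal_not_svdClearCut_le (hq : 0 ≤ q) (hpq : q < p) (hp : p ≤ 1) (hn : 0 < n)
    (hk : 0 < k) (hcl : ∀ v, Measurable fun ω ↦ cl ω v) (hU : ∀ e, Measurable fun ω ↦ U ω e)
    (hindep : iIndepFun (m := mixMS n k) (mixFam cl U) μ)
    (hunif_cl : ∀ v i, μ {ω | cl ω v = i} = (k : ENNReal)⁻¹)
    (hunif_U : ∀ e, μ.map (fun ω ↦ U ω e) = volume.restrict (Set.Ico 0 1))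
    (hL : 1 ≤ Real.log n) (hnp : 1 ≤ n * p) (hnk : 16 * Real.log n ≤ n / k)
    (hsep : 14400 * Real.log n ^ 2 * √(n * p) ≤ (p - q) * (n / k)) :
    μ.real {ω | ¬ SvdClearCut p q (cl ω) (noiseOf p q (cl ω) (U ω))} ≤ 3 / n := by
  set A := ⌈Real.log n⌉₊
  set T : ℝ := 8 * (2 * A ^ 2 + 1 : ℕ) * √(n * p)
  have hLA : Real.log n ≤ A := Nat.le_ceil _
  have hAL : (A : ℝ) < Real.log n + 1 := Nat.ceil_lt_add_one (by linarith)
  have hA : A ≠ 0 := (Nat.ceil_pos.2 (by linarith)).ne'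
  have hnA := natCast_le_four_pow_of_log_le hn hLA
  have hAn : (A : ℝ) ≤ n := by
    linarith [Real.log_le_sub_one_of_pos (Nat.cast_pos (α := ℝ).2 hn)]
  have hT : 200 * T ≤ (p - q) * (n / k) := by
    refine le_trans ?_ hsep
    have : (2 * A ^ 2 + 1 : ℝ) ≤ 9 * Real.log n ^ 2 := by nlinarith
    push_cast [T]
    nlinarith [Real.sqrt_nonneg (n * p)]
  have hsub : {ω | ¬ SvdClearCut p q (cl ω) (noiseOf p q (cl ω) (U ω))} ⊆
      {ω | ¬ EnergyBounded (cl ω) T A (noiseOf p q (cl ω) (U ω))} ∪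
        ⋃ i ∈ univ, {ω | (clusterSize (cl ω) i : ℝ) ≤ n / (2 * k)} := by
    intro ω hω
    contrapose! hω
    simp only [Set.mem_union, Set.mem_ofPred_eq, not_or, not_not, Set.mem_iUnion, mem_univ,
      exists_const, not_exists, not_le] at hω ⊢
    have hsymm := noiseOf_eq_symMatrix (p := p) (q := q) (cl ω) (U ω) ▸ isSymm_symMatrix _
    exact hω.1.svdClearCut hsymm hq hpq hn hk (fun i ↦ (hω.2 i).le) (by positivity) hT hA hnA
  calc _ ≤ _ := (measureReal_mono hsub).trans (measureReal_union_le _ _)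
    _ ≤ 2 / n + 1 / n := by
        gcongr
        · exact (measureReal_not_energyBounded_noiseOf_le hq hpq.le hp hcl hU hindep hunif_U hnp
            hA).trans (mul_inv_pow_le_two_div hn hnA hAn)
        · exact measureReal_exists_clusterSize_le_le hk hcl (iIndepFun_cl_of_mixFam hindep)
            hunif_cl hL hnk
    _ = 3 / n := by ring

end Probability

end SBM

open SBM in
theorem vanilla_svd_clear_cut_general :
    ∃ C > (0 : ℝ), ∀ {n k : ℕ} {p q : ℝ} {m : ℕ} {Ω : Type*} [MeasurableSpace Ω] {μ : Measure Ω}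
      [IsProbabilityMeasure μ] {cl : Ω → Fin n → Fin k} {U : Ω → EIdx n → ℝ},
      0 < n → 0 ≤ q → q < p → p ≤ 1 → 2 ≤ m →
      (∀ v, Measurable fun ω ↦ cl ω v) → (∀ e, Measurable fun ω ↦ U ω e) →
      iIndepFun (m := mixMS n k) (mixFam cl U) μ →
      (∀ v i, μ {ω | cl ω v = i} = (k : ENNReal)⁻¹) →
      (∀ e, μ.map (fun ω ↦ U ω e) = volume.restrict (Set.Ico 0 1)) →
      C * k * ((√(k * p) * Real.log n ^ m + √(Real.log n)) / (p - q)) ^ 2 ≤ n →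
      ENNReal.ofReal (1 - C / n) ≤
        μ {ω | SvdClearCut p q (cl ω) (noiseOf p q (cl ω) (U ω))} := by
  refine ⟨14400 ^ 2, by norm_num, fun {n k p q m Ω _ μ _ cl U} hn hq hpq hp hm hcl hU hindep
    hunif_cl hunif_U hsize ↦ ?_⟩
  have hn' : (0 : ℝ) < n := by exact_mod_cast hn
  rcases le_or_gt (n : ℝ) (14400 ^ 2) with hsmall | hbig
  · rw [ENNReal.ofReal_of_nonpos (sub_nonpos.2 ((one_le_div₀ hn').2 hsmall))]
    exact zero_le
  obtain ⟨ω⟩ := μ.nonempty_of_neZero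
  have hk : 0 < k := (cl ω ⟨0, hn⟩).pos
  have hk' : (1 : ℝ) ≤ k := by exact_mod_cast hk
  have hL : 1 ≤ Real.log n := (Real.le_log_iff_exp_le hn').2 (by linarith [Real.exp_one_lt_d9])
  have hnp : 1 ≤ n * p := one_le_mul_of_sq_mul_le hq hpq hn'.le hk' (by norm_num) hL hm hsize
  have hnk : 14400 ^ 2 * Real.log n ≤ n / k :=
    sq_mul_log_le_div_of_sq_mul_le hq hpq hp hn'.le (by linarith) (by linarith) hsize
  have hsep : 14400 * Real.log n ^ 2 * √(n * p) ≤ (p - q) * (n / k) :=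
    mul_sqrt_le_of_sq_mul_le (hq.trans hpq.le) hpq hn'.le (by linarith) hL hm hsize
  refine ofReal_one_sub_le_measure ((measureReal_not_svdClearCut_le hq hpq hp hn hk hcl hU hindep
    hunif_cl hunif_U hL hnp (by linarith) hsep).trans ?_)
  gcongr
  norm_num

open SBM in
/-- Main theorem: the vanilla-SVD representation is clear-cut in the
SSBM. There is a constant `C > 0` such that: for the SSBM with `n` vertices assigned
independently and uniformly to `k` clusters and edge noise as in the model, if
`σ² = max{p(1−p), q(1−q)} ≥ C log n / n` and
`n ≥ C·k·((√(kp)·(log n)⁶ + √(log n))/(p−q))²`, then with probability at least `1 − C/n`,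
with `Δ = 0.8(p−q)√(n/k)`: vertices in the same cluster have SVD-representations at
distance `≤ Δ/4` and vertices in different clusters at distance `≥ Δ` (hence
`ClusterByDistance` recovers all clusters). -/
theorem vanilla_svd_clear_cut :
    ∃ C > (0 : ℝ),
      ∀ (n k : ℕ) (hn : 0 < n) (hk : 0 < k)
        (p q : ℝ) (hq : 0 ≤ q) (hpq : q < p) (hp : p ≤ 1)
        (Ω : Type) (_ : MeasureSpace Ω) (_ : IsProbabilityMeasure (ℙ : Measure Ω))
        (cl : Ω → Fin n → Fin k) (U : Ω → EIdx n → ℝ)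
        (hmeasc : ∀ v : Fin n, Measurable fun ω => cl ω v)
        (hmeasU : ∀ e : EIdx n, Measurable fun ω => U ω e)
        (hindep : iIndepFun (m := mixMS n k) (mixFam cl U) ℙ)
        (hunifc : ∀ (v : Fin n) (j : Fin k), ℙ {ω : Ω | cl ω v = j} = (k : ENNReal)⁻¹)
        (hunifU : ∀ e : EIdx n,
          Measure.map (fun ω => U ω e) ℙ = volume.restrict (Set.Ico (0 : ℝ) 1))
        (hσ : max (p * (1 - p)) (q * (1 - q)) ≥ C * Real.log n / n)
        (hsize : (n : ℝ) ≥ C * k *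
          ((Real.sqrt ((k : ℝ) * p) * (Real.log n) ^ 6 + Real.sqrt (Real.log n)) /
            (p - q)) ^ 2),
        ENNReal.ofReal (1 - C / (n : ℝ)) ≤
          ℙ {ω : Ω |
            ∀ (lam : Fin n → ℝ) (v : Fin n → Fin n → ℝ),
              IsSpectralDecomp
                (meanMatrix n k p q (cl ω) + noiseOf p q (cl ω) (U ω)) lam v →
              ∀ u w : Fin n,
                (cl ω u = cl ω w →
                  SBM.enorm ((projTop k v).mulVec (column
                        (meanMatrix n k p q (cl ω) + noiseOf p q (cl ω) (U ω)) u) -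
                      (projTop k v).mulVec (column
                        (meanMatrix n k p q (cl ω) + noiseOf p q (cl ω) (U ω)) w)) ≤
                    0.8 * (p - q) * Real.sqrt ((n : ℝ) / k) / 4) ∧
                (cl ω u ≠ cl ω w →
                  0.8 * (p - q) * Real.sqrt ((n : ℝ) / k) ≤
                    SBM.enorm ((projTop k v).mulVec (column
                        (meanMatrix n k p q (cl ω) + noiseOf p q (cl ω) (U ω)) u) -
                      (projTop k v).mulVec (column
                        (meanMatrix n k p q (cl ω) + noiseOf p q (cl ω) (U ω)) w)))} := by
  obtain ⟨C, hC, h⟩ := vanilla_svd_clear_cut_general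
  exact ⟨C, hC, fun n k hn _ p q hq hpq hp Ω _ _ cl U hcl hU hindep hunif_cl hunif_U _ hsize ↦
    h hn hq hpq hp (m := 6) (by norm_num) hcl hU hindep hunif_cl hunif_U hsize⟩
end

section
/- Suppose n ≥ 3, k ≥ 2, the partition is balanced, E ∈ ℝ^{V×V} is any symmetric matrix with ‖E‖₂ ≤ μ/(100·log n), and Ĝ := G + E. Then: for every i ∈ [k], |φ(λ_i(Ĝ)) − 1| < 1/2 and |φ(λ_i(G)) − 1| < 1/2; and for every i with k < i ≤ n, |φ(λ_i(Ĝ))| < n^{−log log n}. -/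
open MeasureTheory ProbabilityTheory Matrix Finset

/-!
`G` has quadratic form `q (∑ x)² + (p - q) ∑ₐ (∑_{cl u = a} x u)²`. By the min-max principle, its
top `k` eigenvalues are at least `(p - q) min |Vₐ|` (test on vectors constant on clusters), all but
the first are at most `(p - q) max |Vₐ|` (test on `x ⊥ 1`), and those beyond the `k`-th vanish.
Weyl's inequality moves each eigenvalue by at most `‖E‖` when passing to `G + E`. Since
`1 - ψ(t) = (1 - t / λ₁) (1 - t / μ)` and `ψ(0) = 0`, the value `ψ(t)` is within `O(1 / log n)` of
`1` near `λ₁` and near `μ`, and of `0` near `0`. The `⌈log n⌉`-th power keeps the former close to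
`1` and makes the latter smaller than `(log n) ^ (-log n)`.
-/

namespace SBM

theorem exists_ne_zero_forall_dual_eq_zero {K V ι : Type*} [Field K] [AddCommGroup V] [Module K V]
    [Fintype ι] (h : Fintype.card ι < Module.finrank K V)
    (f : ι → Module.Dual K V) : ∃ x : V, x ≠ 0 ∧ ∀ i, f i x = 0 := by
  have : FiniteDimensional K V := .of_finrank_pos (by omega)
  have hker : LinearMap.ker (LinearMap.pi f) ≠ ⊥ :=
    LinearMap.ker_ne_bot_of_finrank_lt (by simpa using h)
  obtain ⟨x, hx, hx0⟩ := (Submodule.ne_bot_iff _).1 hker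
  exact ⟨x, hx0, fun i => congrFun (LinearMap.mem_ker.1 hx) i⟩

theorem dotProduct_self_pos {m : Type*} [Fintype m] {x : m → ℝ} (hx : x ≠ 0) : 0 < x ⬝ᵥ x := by
  simpa using Matrix.dotProduct_star_self_pos_iff.2 hx

theorem abs_dotProduct_mulVec_le_specNorm {n : ℕ} (E : Matrix (Fin n) (Fin n) ℝ)
    (x : Fin n → ℝ) : |x ⬝ᵥ E *ᵥ x| ≤ specNorm E * (x ⬝ᵥ x) := by
  set y : EuclideanSpace ℝ (Fin n) := WithLp.toLp 2 x
  have hy : x ⬝ᵥ x = ‖y‖ * ‖y‖ := by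
    rw [← real_inner_self_eq_norm_mul_norm, EuclideanSpace.inner_eq_star_dotProduct]
    simp [y]
  calc |x ⬝ᵥ E *ᵥ x| = |inner ℝ y (Matrix.toEuclideanCLM (𝕜 := ℝ) E y)| := by
        rw [Matrix.inner_toEuclideanCLM]
    _ ≤ ‖y‖ * ‖Matrix.toEuclideanCLM (𝕜 := ℝ) E y‖ := abs_real_inner_le_norm _ _
    _ ≤ ‖y‖ * (specNorm E * ‖y‖) := by gcongr; exact ContinuousLinearMap.le_opNorm _ _
    _ = specNorm E * (x ⬝ᵥ x) := by rw [hy]; ring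

namespace IsSpectralDecomp

variable {n : ℕ} {A B : Matrix (Fin n) (Fin n) ℝ} {lam lam' : Fin n → ℝ}
  {v v' : Fin n → Fin n → ℝ}

theorem dotProduct_self_eq_sum (h : IsSpectralDecomp A lam v) (x : Fin n → ℝ) :
    x ⬝ᵥ x = ∑ j, (v j ⬝ᵥ x) ^ 2 := by
  have hrows : Matrix.of v * (Matrix.of v)ᵀ = 1 := by
    ext i j
    simpa [Matrix.mul_apply, Matrix.one_apply, dotProduct] using h.2.1 i j
  have hcols : (Matrix.of v)ᵀ * Matrix.of v = 1 := mul_eq_one_comm.1 hrows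
  calc x ⬝ᵥ x = (Matrix.of v *ᵥ x) ⬝ᵥ (Matrix.of v *ᵥ x) := by
        rw [Matrix.dotProduct_mulVec, ← Matrix.mulVec_transpose, Matrix.mulVec_mulVec, hcols,
          Matrix.one_mulVec]
    _ = ∑ j, (v j ⬝ᵥ x) ^ 2 := by simp [dotProduct, Matrix.mulVec, sq]

theorem dotProduct_mulVec_eq_sum (h : IsSpectralDecomp A lam v) (x : Fin n → ℝ) :
    x ⬝ᵥ A *ᵥ x = ∑ j, lam j * (v j ⬝ᵥ x) ^ 2 := by
  rw [h.2.2, Matrix.sum_mulVec, dotProduct_sum]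
  refine Finset.sum_congr rfl fun j _ => ?_
  rw [Matrix.smul_mulVec, Matrix.vecMulVec_mulVec, dotProduct_smul]
  simp [dotProduct_comm x, sq]

theorem dotProduct_mulVec_le (h : IsSpectralDecomp A lam v) (i : Fin n) {x : Fin n → ℝ}
    (hx : ∀ j < i, v j ⬝ᵥ x = 0) : x ⬝ᵥ A *ᵥ x ≤ lam i * (x ⬝ᵥ x) := by
  rw [h.dotProduct_mulVec_eq_sum, h.dotProduct_self_eq_sum, Finset.mul_sum]
  refine Finset.sum_le_sum fun j _ => ?_
  rcases lt_or_ge j i with hj | hj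
  · simp [hx j hj]
  · exact mul_le_mul_of_nonneg_right (h.1 hj) (sq_nonneg _)

theorem le_dotProduct_mulVec (h : IsSpectralDecomp A lam v) (i : Fin n) {x : Fin n → ℝ}
    (hx : ∀ j > i, v j ⬝ᵥ x = 0) : lam i * (x ⬝ᵥ x) ≤ x ⬝ᵥ A *ᵥ x := by
  rw [h.dotProduct_mulVec_eq_sum, h.dotProduct_self_eq_sum, Finset.mul_sum]
  refine Finset.sum_le_sum fun j _ => ?_
  rcases lt_or_ge i j with hj | hj
  · simp [hx j hj]
  · exact mul_le_mul_of_nonneg_right (h.1 hj) (sq_nonneg _)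

theorem le_eigenvalue (h : IsSpectralDecomp A lam v) {i : Fin n} {c : ℝ}
    (W : Submodule ℝ (Fin n → ℝ)) (hi : i < Module.finrank ℝ W)
    (hW : ∀ x ∈ W, c * (x ⬝ᵥ x) ≤ x ⬝ᵥ A *ᵥ x) : c ≤ lam i := by
  obtain ⟨⟨x, hxW⟩, hx0, hx⟩ := exists_ne_zero_forall_dual_eq_zero (ι := {j : Fin n // j < i})
    (by simpa [Fintype.card_subtype, Finset.filter_gt_eq_Iio] using hi)
    fun j => dotProductBilin ℝ ℝ (v j) ∘ₗ W.subtype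
  have hx0 : x ≠ 0 := fun hx => hx0 (Subtype.ext hx)
  have hle := h.dotProduct_mulVec_le i fun j hj => hx ⟨j, hj⟩
  exact le_of_mul_le_mul_right ((hW x hxW).trans hle) (dotProduct_self_pos hx0)

theorem eigenvalue_le (h : IsSpectralDecomp A lam v) {ι : Type*} [Fintype ι] {i : Fin n} {c : ℝ}
    (hi : Fintype.card ι ≤ i) (w : ι → Fin n → ℝ)
    (hw : ∀ x, (∀ a, w a ⬝ᵥ x = 0) → x ⬝ᵥ A *ᵥ x ≤ c * (x ⬝ᵥ x)) : lam i ≤ c := by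
  have hcard : Fintype.card {j : Fin n // i < j} = n - 1 - i := by
    simp [Fintype.card_subtype, Finset.filter_lt_eq_Ioi]
  obtain ⟨x, hx0, hx⟩ := exists_ne_zero_forall_dual_eq_zero (ι := {j : Fin n // i < j} ⊕ ι)
    (by rw [Fintype.card_sum, hcard, Module.finrank_fin_fun]; omega)
    fun j => dotProductBilin ℝ ℝ (Sum.elim (fun j : {j : Fin n // i < j} => v j) w j)
  have hle := h.le_dotProduct_mulVec i fun j hj => hx (Sum.inl ⟨j, hj⟩)
  exact le_of_mul_le_mul_right (hle.trans (hw x fun a => hx (Sum.inr a))) (dotProduct_self_pos hx0)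

theorem eigenvalue_le_add (h : IsSpectralDecomp A lam v) (h' : IsSpectralDecomp B lam' v') {e : ℝ}
    (hAB : ∀ x, x ⬝ᵥ A *ᵥ x ≤ x ⬝ᵥ B *ᵥ x + e * (x ⬝ᵥ x)) (i : Fin n) : lam i ≤ lam' i + e := by
  refine h.eigenvalue_le (ι := {j : Fin n // j < i})
    (by simp [Fintype.card_subtype, Finset.filter_gt_eq_Iio]) (fun j => v' j) fun x hx => ?_
  rw [add_mul]
  exact (hAB x).trans (by gcongr; exact h'.dotProduct_mulVec_le i fun j hj => hx ⟨j, hj⟩)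

theorem abs_eigenvalue_sub_le_specNorm {E : Matrix (Fin n) (Fin n) ℝ}
    (h : IsSpectralDecomp A lam v) (h' : IsSpectralDecomp (A + E) lam' v') (i : Fin n) :
    |lam' i - lam i| ≤ specNorm E := by
  have hE := fun x => abs_le.1 (abs_dotProduct_mulVec_le_specNorm E x)
  have hadd (x : Fin n → ℝ) : x ⬝ᵥ (A + E) *ᵥ x = x ⬝ᵥ A *ᵥ x + x ⬝ᵥ E *ᵥ x := by
    rw [Matrix.add_mulVec, dotProduct_add]
  have hupper := h'.eigenvalue_le_add h (e := specNorm E)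
    (fun x => by linarith [hadd x, (hE x).2]) i
  have hlower := h.eigenvalue_le_add h' (e := specNorm E)
    (fun x => by linarith [hadd x, (hE x).1]) i
  rw [abs_le]
  constructor <;> linarith

end IsSpectralDecomp

section MeanMatrix

variable {n k : ℕ} {p q s : ℝ} {cl : Fin n → Fin k} {lam : Fin n → ℝ} {v : Fin n → Fin n → ℝ}

/-- The sum of the entries of `x` over the cluster `a`. With `Z` the cluster indicator matrix this
is `(Zᵀ x) a`, and the mean matrix is `q 1 1ᵀ + (p - q) Z Zᵀ`. -/
def clusterSum (cl : Fin n → Fin k) (x : Fin n → ℝ) (a : Fin k) : ℝ :=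
  ∑ u with cl u = a, x u

theorem sum_clusterSum (cl : Fin n → Fin k) (x : Fin n → ℝ) :
    ∑ a, clusterSum cl x a = ∑ u, x u :=
  Finset.sum_fiberwise _ _ _

theorem dotProduct_comp_eq_clusterSum_dotProduct (x : Fin n → ℝ) (y : Fin k → ℝ) :
    x ⬝ᵥ (y ∘ cl) = clusterSum cl x ⬝ᵥ y := by
  simp only [dotProduct, clusterSum, Finset.sum_mul]
  rw [← Finset.sum_fiberwise _ cl]
  refine Finset.sum_congr rfl fun a _ => Finset.sum_congr rfl fun u hu => ?_
  rw [Function.comp_apply, (Finset.mem_filter.1 hu).2]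

theorem clusterSum_comp (y : Fin k → ℝ) (a : Fin k) :
    clusterSum cl (y ∘ cl) a = clusterSize cl a * y a := by
  calc clusterSum cl (y ∘ cl) a = ∑ u with cl u = a, y a :=
        Finset.sum_congr rfl fun u hu => by rw [Function.comp_apply, (Finset.mem_filter.1 hu).2]
    _ = clusterSize cl a * y a := by simp [clusterSize]

theorem sum_clusterSum_sq_le (hsize : ∀ a, (clusterSize cl a : ℝ) ≤ s) (x : Fin n → ℝ) :
    ∑ a, clusterSum cl x a ^ 2 ≤ s * (x ⬝ᵥ x) := by
  calc ∑ a, clusterSum cl x a ^ 2 ≤ ∑ a, clusterSize cl a * ∑ u with cl u = a, x u ^ 2 :=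
        Finset.sum_le_sum fun a _ => sq_sum_le_card_mul_sum_sq
    _ ≤ ∑ a, s * ∑ u with cl u = a, x u ^ 2 := by gcongr with a; exact hsize a
    _ = s * (x ⬝ᵥ x) := by
        rw [← Finset.mul_sum, Finset.sum_fiberwise]
        simp only [dotProduct, sq]

theorem mul_dotProduct_comp_le_sum_clusterSum_sq (hsize : ∀ a, s ≤ clusterSize cl a)
    (y : Fin k → ℝ) :
    s * ((y ∘ cl) ⬝ᵥ (y ∘ cl)) ≤ ∑ a, clusterSum cl (y ∘ cl) a ^ 2 := by
  rw [dotProduct_comp_eq_clusterSum_dotProduct, dotProduct, Finset.mul_sum]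
  refine Finset.sum_le_sum fun a _ => ?_
  rw [clusterSum_comp]
  calc s * (clusterSize cl a * y a * y a)
      ≤ clusterSize cl a * (clusterSize cl a * y a * y a) := by
        rw [mul_assoc (clusterSize cl a : ℝ)]
        have := mul_self_nonneg (y a)
        gcongr
        exact hsize a
    _ = (clusterSize cl a * y a) ^ 2 := by ring

theorem meanMatrix_mulVec (p q : ℝ) (cl : Fin n → Fin k) (x : Fin n → ℝ) :
    meanMatrix n k p q cl *ᵥ x =
      (fun _ => q * ∑ u, x u) + ((p - q) • clusterSum cl x) ∘ cl := by
  ext u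
  simp only [Matrix.mulVec, dotProduct, Pi.add_apply, Function.comp_apply, Pi.smul_apply,
    smul_eq_mul, clusterSum, Finset.sum_filter, Finset.mul_sum, ← Finset.sum_add_distrib]
  refine Finset.sum_congr rfl fun w _ => ?_
  by_cases h : cl u = cl w
  · simp [meanMatrix, h]
    ring
  · simp [meanMatrix, h, Ne.symm h]

theorem dotProduct_meanMatrix_mulVec (p q : ℝ) (cl : Fin n → Fin k) (x : Fin n → ℝ) :
    x ⬝ᵥ meanMatrix n k p q cl *ᵥ x =
      q * (∑ u, x u) ^ 2 + (p - q) * ∑ a, clusterSum cl x a ^ 2 := by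
  rw [meanMatrix_mulVec, dotProduct_add, dotProduct_comp_eq_clusterSum_dotProduct,
    dotProduct_smul, smul_eq_mul]
  simp only [dotProduct, ← Finset.sum_mul, ← sq]
  ring

theorem mul_le_meanMatrix_eigenvalue (hq : 0 ≤ q) (hpq : q ≤ p) (hs : 0 < s)
    (hsize : ∀ a, s ≤ clusterSize cl a) (h : IsSpectralDecomp (meanMatrix n k p q cl) lam v)
    {i : Fin n} (hi : (i : ℕ) < k) : (p - q) * s ≤ lam i := by
  have hsurj : Function.Surjective cl := fun a => by
    have hpos : 0 < clusterSize cl a := by exact_mod_cast hs.trans_le (hsize a)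
    obtain ⟨u, hu⟩ := Finset.card_pos.1 hpos
    exact ⟨u, (Finset.mem_filter.1 hu).2⟩
  refine h.le_eigenvalue (LinearMap.range (LinearMap.funLeft ℝ ℝ cl)) ?_ ?_
  · rw [LinearMap.finrank_range_of_inj (LinearMap.funLeft_injective_of_surjective ℝ ℝ cl hsurj),
      Module.finrank_fin_fun]
    exact hi
  · rintro _ ⟨y, rfl⟩
    change _ * ((y ∘ cl) ⬝ᵥ (y ∘ cl)) ≤ (y ∘ cl) ⬝ᵥ _ *ᵥ (y ∘ cl)
    rw [dotProduct_meanMatrix_mulVec, mul_assoc]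
    exact (mul_le_mul_of_nonneg_left (mul_dotProduct_comp_le_sum_clusterSum_sq hsize y)
      (sub_nonneg.2 hpq)).trans (le_add_of_nonneg_left (by positivity))

theorem meanMatrix_eigenvalue_le_mul (hpq : q ≤ p) (hsize : ∀ a, (clusterSize cl a : ℝ) ≤ s)
    (h : IsSpectralDecomp (meanMatrix n k p q cl) lam v) {i : Fin n} (hi : 0 < (i : ℕ)) :
    lam i ≤ (p - q) * s := by
  refine h.eigenvalue_le (ι := Unit) (by rwa [Fintype.card_unit]) (fun _ => 1) fun x hx => ?_
  have hsum : ∑ u, x u = 0 := by simpa [dotProduct] using hx ()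
  rw [dotProduct_meanMatrix_mulVec, hsum, mul_assoc]
  simpa using mul_le_mul_of_nonneg_left (sum_clusterSum_sq_le hsize x) (sub_nonneg.2 hpq)

theorem meanMatrix_eigenvalue_eq_zero (hq : 0 ≤ q) (hpq : q ≤ p)
    (h : IsSpectralDecomp (meanMatrix n k p q cl) lam v) {i : Fin n} (hi : k ≤ (i : ℕ)) :
    lam i = 0 := by
  apply le_antisymm
  · refine h.eigenvalue_le (by simpa using hi) (fun a u => if cl u = a then 1 else 0) fun x hx => ?_
    have hcluster (a : Fin k) : clusterSum cl x a = 0 := by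
      simpa [dotProduct, clusterSum, Finset.sum_filter] using hx a
    rw [dotProduct_meanMatrix_mulVec, ← sum_clusterSum cl]
    simp [hcluster]
  · refine h.le_eigenvalue ⊤ (by simp) fun x _ => ?_
    rw [dotProduct_meanMatrix_mulVec, zero_mul]
    have := sub_nonneg.2 hpq
    positivity

end MeanMatrix

section Polynomial

variable {l m t δ : ℝ}

theorem one_sub_psiR (hl : l ≠ 0) (hm : m ≠ 0) (t : ℝ) :
    1 - psiR l m t = (1 - t / l) * (1 - t / m) := by
  unfold psiR
  field_simp
  ring

theorem abs_psiR_sub_one (hl : 0 < l) (hm : 0 < m) (t : ℝ) :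
    |psiR l m t - 1| = |t - l| * |t - m| / (l * m) := by
  rw [abs_sub_comm, one_sub_psiR hl.ne' hm.ne', abs_mul, one_sub_div hl.ne', one_sub_div hm.ne',
    abs_div, abs_div, abs_of_pos hl, abs_of_pos hm, abs_sub_comm l, abs_sub_comm m,
    div_mul_div_comm]

theorem abs_psiR_sub_one_le_of_abs_sub_left_le (hm : 0 < m) (hml : m ≤ 2 * l) (hδ : δ ≤ 1)
    (ht : |t - l| ≤ δ * m) : |psiR l m t - 1| ≤ 3 * δ := by
  have hl : 0 < l := by linarith
  have hδ0 : 0 ≤ δ := nonneg_of_mul_nonneg_left ((abs_nonneg _).trans ht) hm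
  have htm : |t - m| ≤ 3 * l :=
    calc |t - m| ≤ |t - l| + |l - m| := abs_sub_le _ _ _
      _ ≤ 1 * m + l := by
        gcongr
        · exact ht.trans (by gcongr)
        · exact abs_le.2 ⟨by linarith, by linarith⟩
      _ ≤ 3 * l := by linarith
  rw [abs_psiR_sub_one hl hm, div_le_iff₀ (by positivity)]
  calc |t - l| * |t - m| ≤ δ * m * (3 * l) := by gcongr
    _ = 3 * δ * (l * m) := by ring

theorem abs_psiR_sub_one_le_of_abs_sub_right_le (hl : 0 < l) (hm : 0 < m) (htl : |t - l| ≤ l)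
    (ht : |t - m| ≤ δ * m) : |psiR l m t - 1| ≤ δ := by
  rw [abs_psiR_sub_one hl hm, div_le_iff₀ (by positivity)]
  calc |t - l| * |t - m| ≤ l * (δ * m) := by gcongr
    _ = δ * (l * m) := by ring

theorem abs_psiR_le (hm : 0 < m) (hml : m ≤ 2 * l) (hδ : δ ≤ 1 / 2) (ht : |t| ≤ δ * m) :
    |psiR l m t| ≤ 4 * δ := by
  have hl : 0 < l := by linarith
  have hδ0 : 0 ≤ δ := nonneg_of_mul_nonneg_left ((abs_nonneg _).trans ht) hm
  have hfactor : psiR l m t = t * (l + m - t) / (l * m) := by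
    unfold psiR
    field_simp
    ring
  have hcofactor : |l + m - t| ≤ 4 * l := by
    obtain ⟨h1, h2⟩ := abs_le.1 (ht.trans (mul_le_mul_of_nonneg_right hδ hm.le))
    exact abs_le.2 ⟨by linarith, by linarith⟩
  rw [hfactor, abs_div, abs_mul, abs_of_pos (by positivity : 0 < l * m),
    div_le_iff₀ (by positivity)]
  calc |t| * |l + m - t| ≤ δ * m * (4 * l) := by gcongr
    _ = 4 * δ * (l * m) := by ring

end Polynomial

section Power

variable {L x : ℝ}

theorem abs_pow_sub_one_le_exp (x : ℝ) (r : ℕ) : |x ^ r - 1| ≤ Real.exp (r * |x - 1|) - 1 := by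
  simpa using Finset.norm_prod_one_add_sub_one_le (Finset.range r) fun _ => x - 1

theorem abs_pow_ceil_sub_one_lt (hL : 1 < L) (hx : |x - 1| ≤ 1 / 10 * L⁻¹) :
    |x ^ ⌈L⌉₊ - 1| < 1 / 2 := by
  have hexponent : ⌈L⌉₊ * |x - 1| ≤ 1 / 5 :=
    calc (⌈L⌉₊ : ℝ) * |x - 1| ≤ 2 * L * (1 / 10 * L⁻¹) := by
          gcongr
          exact (Nat.ceil_lt_two_mul (by linarith)).le
      _ = 1 / 5 := by field_simp; norm_num
  calc |x ^ ⌈L⌉₊ - 1| ≤ Real.exp (⌈L⌉₊ * |x - 1|) - 1 := abs_pow_sub_one_le_exp _ _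
    _ ≤ Real.exp (1 / 5) - 1 := by gcongr
    _ ≤ 1 / (1 - 1 / 5) - 1 := by
        gcongr
        exact Real.exp_bound_div_one_sub_of_interval (by norm_num) (by norm_num)
    _ < 1 / 2 := by norm_num

theorem abs_pow_ceil_lt_rpow_neg (hL : 1 < L) (hx : |x| < L⁻¹) : |x ^ ⌈L⌉₊| < L ^ (-L) := by
  have hL0 : 0 < L := one_pos.trans hL
  calc |x ^ ⌈L⌉₊| = |x| ^ ⌈L⌉₊ := abs_pow _ _
    _ < L⁻¹ ^ ⌈L⌉₊ := pow_lt_pow_left₀ hx (abs_nonneg _) (Nat.ceil_pos.2 hL0).ne'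
    _ = L⁻¹ ^ (⌈L⌉₊ : ℝ) := (Real.rpow_natCast _ _).symm
    _ ≤ L⁻¹ ^ L := Real.rpow_le_rpow_of_exponent_ge (inv_pos.2 hL0) (inv_lt_one_of_one_lt₀ hL).le
        (Nat.le_ceil L)
    _ = L ^ (-L) := by rw [Real.inv_rpow hL0.le, Real.rpow_neg hL0.le]

theorem rpow_neg_log_log (hx : 1 < x) :
    x ^ (-Real.log (Real.log x)) = Real.log x ^ (-Real.log x) := by
  rw [Real.rpow_def_of_pos (one_pos.trans hx), Real.rpow_def_of_pos (Real.log_pos hx)]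
  ring_nf

theorem one_lt_log_of_three_le (hx : 3 ≤ x) : 1 < Real.log x := by
  rw [Real.lt_log_iff_exp_lt (by linarith)]
  linarith [Real.exp_one_lt_d9]

end Power

section Eigenvalues

variable {n k : ℕ} {p q s ε δ t : ℝ} {cl : Fin n → Fin k} {lam : Fin n → ℝ}
  {v : Fin n → Fin n → ℝ} {i : Fin n}

theorem mul_le_two_mul_meanMatrix_eigenvalue_zero (hq : 0 ≤ q) (hpq : q ≤ p) (hs : 0 < s)
    (hε : ε ≤ 1 / 2) (hsize : ∀ a, (1 - ε) * s ≤ clusterSize cl a)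
    (h : IsSpectralDecomp (meanMatrix n k p q cl) lam v) (hn : 0 < n) :
    (p - q) * s ≤ 2 * lam ⟨0, hn⟩ := by
  have hhalf (a : Fin k) : s / 2 ≤ clusterSize cl a := by nlinarith [hsize a]
  linarith [mul_le_meanMatrix_eigenvalue hq hpq (half_pos hs) hhalf h
    (i := ⟨0, hn⟩) (cl ⟨0, hn⟩).pos]

theorem abs_psiR_sub_one_le_of_near_top_eigenvalue (hq : 0 ≤ q) (hpq : q < p) (hs : 0 < s)
    (hε : ε ≤ 1 / 2) (hδ : δ ≤ 1 / 2)
    (hsize : ∀ a, (1 - ε) * s ≤ clusterSize cl a ∧ clusterSize cl a ≤ (1 + ε) * s)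
    (h : IsSpectralDecomp (meanMatrix n k p q cl) lam v) (hi : (i : ℕ) < k)
    (ht : |t - lam i| ≤ δ * ((p - q) * s)) :
    |psiR (lam ⟨0, i.pos⟩) ((p - q) * s) t - 1| ≤ ε + 3 * δ := by
  have hm : 0 < (p - q) * s := mul_pos (sub_pos.2 hpq) hs
  have hml := mul_le_two_mul_meanMatrix_eigenvalue_zero hq hpq.le hs hε (fun a => (hsize a).1) h
    i.pos
  have hδ0 : 0 ≤ δ := nonneg_of_mul_nonneg_left ((abs_nonneg _).trans ht) hm
  rcases Nat.eq_zero_or_pos i with h0 | h0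
  · rw [show i = ⟨0, i.pos⟩ from Fin.ext h0] at ht
    have hε0 : 0 ≤ ε := by nlinarith [(hsize (cl i)).1.trans (hsize (cl i)).2]
    linarith [abs_psiR_sub_one_le_of_abs_sub_left_le hm hml (by linarith) ht]
  · have hlower := mul_le_meanMatrix_eigenvalue hq hpq.le (mul_pos (by linarith) hs)
      (fun a => (hsize a).1) h hi
    have hupper := meanMatrix_eigenvalue_le_mul hpq.le (fun a => (hsize a).2) h h0
    have hmax : lam i ≤ lam ⟨0, i.pos⟩ := h.1 (Nat.zero_le _)
    obtain ⟨ht1, ht2⟩ := abs_le.1 ht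
    have htl : |t - lam ⟨0, i.pos⟩| ≤ lam ⟨0, i.pos⟩ := abs_le.2 ⟨by nlinarith, by nlinarith⟩
    have htm : |t - (p - q) * s| ≤ (ε + δ) * ((p - q) * s) :=
      abs_le.2 ⟨by linarith, by linarith⟩
    linarith [abs_psiR_sub_one_le_of_abs_sub_right_le (by linarith) hm htl htm]

theorem abs_psiR_le_of_near_bottom_eigenvalue (hq : 0 ≤ q) (hpq : q < p) (hs : 0 < s)
    (hε : ε ≤ 1 / 2) (hδ : δ ≤ 1 / 2) (hsize : ∀ a, (1 - ε) * s ≤ clusterSize cl a)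
    (h : IsSpectralDecomp (meanMatrix n k p q cl) lam v) (hi : k ≤ (i : ℕ))
    (ht : |t - lam i| ≤ δ * ((p - q) * s)) :
    |psiR (lam ⟨0, i.pos⟩) ((p - q) * s) t| ≤ 4 * δ := by
  rw [meanMatrix_eigenvalue_eq_zero hq hpq.le h hi, sub_zero] at ht
  exact abs_psiR_le (mul_pos (sub_pos.2 hpq) hs)
    (mul_le_two_mul_meanMatrix_eigenvalue_zero hq hpq.le hs hε hsize h i.pos) hδ ht

end Eigenvalues

end SBM

open SBM in
theorem phi_of_eigenvalues_general {n k : ℕ} {p q s L : ℝ} (hq : 0 ≤ q) (hpq : q < p)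
    (hs : 0 < s) (hL : 1 < L) {cl : Fin n → Fin k}
    (hsize : ∀ a, (1 - 1 / (16 * L)) * s ≤ clusterSize cl a ∧
      clusterSize cl a ≤ (1 + 1 / (16 * L)) * s)
    {E : Matrix (Fin n) (Fin n) ℝ} (hE : specNorm E ≤ (p - q) * s / (100 * L))
    {lamG lamH : Fin n → ℝ} {vG vH : Fin n → Fin n → ℝ}
    (hG : IsSpectralDecomp (meanMatrix n k p q cl) lamG vG)
    (hH : IsSpectralDecomp (meanMatrix n k p q cl + E) lamH vH) (i : Fin n) :
    ((i : ℕ) < k →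
      |phiR (lamG ⟨0, i.pos⟩) ((p - q) * s) ⌈L⌉₊ (lamH i) - 1| < 1 / 2 ∧
      |phiR (lamG ⟨0, i.pos⟩) ((p - q) * s) ⌈L⌉₊ (lamG i) - 1| < 1 / 2) ∧
    (k ≤ (i : ℕ) → |phiR (lamG ⟨0, i.pos⟩) ((p - q) * s) ⌈L⌉₊ (lamH i)| < L ^ (-L)) := by
  have hc0 : 0 < L⁻¹ := by positivity
  have hc1 : L⁻¹ < 1 := inv_lt_one_of_one_lt₀ hL
  have hε : 1 / (16 * L) = L⁻¹ / 16 := by ring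
  have hδ : (p - q) * s / (100 * L) = L⁻¹ / 100 * ((p - q) * s) := by ring
  rw [hε] at hsize
  have hweyl : |lamH i - lamG i| ≤ L⁻¹ / 100 * ((p - q) * s) :=
    hδ ▸ (hG.abs_eigenvalue_sub_le_specNorm hH i).trans hE
  have htop (hi : (i : ℕ) < k) {t : ℝ} (ht : |t - lamG i| ≤ L⁻¹ / 100 * ((p - q) * s)) :
      |phiR (lamG ⟨0, i.pos⟩) ((p - q) * s) ⌈L⌉₊ t - 1| < 1 / 2 :=
    abs_pow_ceil_sub_one_lt hL <| (abs_psiR_sub_one_le_of_near_top_eigenvalue hq hpq hs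
      (by linarith) (by linarith) hsize hG hi ht).trans (by linarith)
  refine ⟨fun hi => ⟨htop hi hweyl, htop hi ?_⟩, fun hi => ?_⟩
  · simpa using (abs_nonneg _).trans hweyl
  · exact abs_pow_ceil_lt_rpow_neg hL <| (abs_psiR_le_of_near_bottom_eigenvalue hq hpq hs
      (by linarith) (by linarith) (fun a => (hsize a).1) hG hi hweyl).trans_lt (by linarith)

open SBM in
/-- Claim on eigenvalues under the polynomial `φ`. Suppose `n ≥ 3`,
`k ≥ 2`, the partition is balanced, `E` is symmetric with `‖E‖₂ ≤ μ/(100 log n)` and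
`Ĝ = G + E`.  Then for `i ∈ [k]`, `|φ(λᵢ(Ĝ)) − 1| < 1/2` and `|φ(λᵢ(G)) − 1| < 1/2`, and
for `k < i ≤ n`, `|φ(λᵢ(Ĝ))| < n^{−log log n}`. -/
theorem phi_of_eigenvalues (n k : ℕ) (hn : 3 ≤ n) (hk : 2 ≤ k)
    (p q : ℝ) (hq : 0 ≤ q) (hpq : q < p) (hp : p ≤ 1)
    (cl : Fin n → Fin k) (hbal : Balanced n k cl)
    (E : Matrix (Fin n) (Fin n) ℝ) (hE : E.IsSymm)
    (hEnorm : specNorm E ≤ (p - q) * ((n : ℝ) / k) / (100 * Real.log n))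
    (lamG : Fin n → ℝ) (vG : Fin n → Fin n → ℝ)
    (hdecG : IsSpectralDecomp (meanMatrix n k p q cl) lamG vG)
    (lamH : Fin n → ℝ) (vH : Fin n → Fin n → ℝ)
    (hdecH : IsSpectralDecomp (meanMatrix n k p q cl + E) lamH vH) :
    ∀ i : Fin n,
      ((i : ℕ) < k →
        |phiR (lamG ⟨0, by omega⟩) ((p - q) * ((n : ℝ) / k)) ⌈Real.log n⌉₊ (lamH i) - 1|
            < 1 / 2 ∧
        |phiR (lamG ⟨0, by omega⟩) ((p - q) * ((n : ℝ) / k)) ⌈Real.log n⌉₊ (lamG i) - 1|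
            < 1 / 2) ∧
      (k ≤ (i : ℕ) →
        |phiR (lamG ⟨0, by omega⟩) ((p - q) * ((n : ℝ) / k)) ⌈Real.log n⌉₊ (lamH i)|
            < (n : ℝ) ^ (-Real.log (Real.log n))) := by
  have hlog : 1 < Real.log n := one_lt_log_of_three_le (by exact_mod_cast hn)
  rw [rpow_neg_log_log (by exact_mod_cast (by omega : 1 < n))]
  exact phi_of_eigenvalues_general hq hpq (by positivity) hlog hbal hEnorm hdecG hdecH
end
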